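/- arXiv:2602.05357 — 2 statements merged into one kernel-verified Lean document; each statement's English description precedes it below -/
import Mathlib

section
/- Let θ : ℝⁿ → [−∞,+∞] be symmetric and locally Lipschitz continuous relative to its domain, and let the spectral function g = θ∘λ be lower semicontinuous. Let (X,Y) ∈ gph ∂̂g with Y = U·Diag(y)·Uᵀ for some y ∈ ∂̂θ(λ(X)) and U ∈ Oⁿ(X), and assume θ is twice epi-differentiable at λ(X) for y. Let v = Qy for a block-diagonal permutation matrix Q (blocks indexed by α₁,…,α_r) chosen so that each block v_{α_m} has nonincreasing entries. Then for every H ∈ Sⁿ with d²g(X,Y)(H) < +∞, d²g(X,Y)(H) = d²θ(λ(X),v)(λ'(X;H)) + 2·∑_{m=1}^{r} ⟨Diag(y_{α_m}), U_{α_m}ᵀ·H·(μ_m·I − X)^†·H·U_{α_m}⟩. -/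
open Filter Topology Matrix

noncomputable section

namespace SpecPaper

/-! ## Generic variational analysis definitions over a topological real vector space -/

variable {E : Type*}

section Generic

variable [AddCommGroup E] [Module ℝ E] [TopologicalSpace E]

/-- `f x` is finite (neither `+∞` nor `-∞`). -/
def IsFiniteAt (f : E → EReal) (x : E) : Prop :=
  f x ≠ ⊤ ∧ f x ≠ ⊥

/-- The norm induced by a given inner product. -/
noncomputable def nrm (ip : E → E → ℝ) (x : E) : ℝ :=
  Real.sqrt (ip x x)

/-- The subderivative `df(x)(w)`. -/
noncomputable def subderiv (f : E → EReal) (x w : E) : EReal :=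
  Filter.liminf (fun p : ℝ × E => (((p.1)⁻¹ : ℝ) : EReal) * (f (x + p.1 • p.2) - f x))
    ((nhdsWithin (0 : ℝ) (Set.Ioi 0)) ×ˢ nhds w)

/-- The second-order difference quotient `Δ²ₜ f(x,v)(w)`. -/
noncomputable def sdq2 (ip : E → E → ℝ) (f : E → EReal) (x v : E) (t : ℝ) (w : E) : EReal :=
  (((2 / t ^ 2) : ℝ) : EReal) * (f (x + t • w) - f x - ((t * ip v w : ℝ) : EReal))

/-- The second subderivative `d²f(x,v)(w)`. -/
noncomputable def subderiv2 (ip : E → E → ℝ) (f : E → EReal) (x v w : E) : EReal :=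
  Filter.liminf (fun p : ℝ × E => sdq2 ip f x v p.1 p.2)
    ((nhdsWithin (0 : ℝ) (Set.Ioi 0)) ×ˢ nhds w)

/-- Twice epi-differentiability of `f` at `x` for `v`. -/
def TwiceEpiDiff (ip : E → E → ℝ) (f : E → EReal) (x v : E) : Prop :=
  IsFiniteAt f x ∧
    ∀ t : ℕ → ℝ, (∀ k, 0 < t k) → Tendsto t atTop (nhds 0) →
      ∀ w : E, ∃ ws : ℕ → E, Tendsto ws atTop (nhds w) ∧
        Tendsto (fun k => sdq2 ip f x v (t k) (ws k)) atTop (nhds (subderiv2 ip f x v w))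

/-- `v` is a regular subgradient of `f` at `x`. -/
def RegSubgrad (ip : E → E → ℝ) (f : E → EReal) (x v : E) : Prop :=
  IsFiniteAt f x ∧
    (0 : EReal) ≤ Filter.liminf
      (fun y : E =>
        (((nrm ip (y - x))⁻¹ : ℝ) : EReal) * (f y - f x - ((ip v (y - x) : ℝ) : EReal)))
      (nhdsWithin x {x}ᶜ)

/-- `v` is a (limiting) subgradient of `f` at `x`. -/
def LimSubgrad (ip : E → E → ℝ) (f : E → EReal) (x v : E) : Prop :=
  ∃ xs vs : ℕ → E, (∀ k, RegSubgrad ip f (xs k) (vs k)) ∧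
    Tendsto xs atTop (nhds x) ∧ Tendsto vs atTop (nhds v) ∧
    Tendsto (fun k => f (xs k)) atTop (nhds (f x))

/-- The tangent cone to `C` at `x`. -/
def tangentCone (C : Set E) (x : E) : Set E :=
  {w | ∃ (t : ℕ → ℝ) (ws : ℕ → E), (∀ k, 0 < t k) ∧ Tendsto t atTop (nhds 0) ∧
    Tendsto ws atTop (nhds w) ∧ ∀ k, x + t k • ws k ∈ C}

/-- The regular normal cone to `C` at `x`. -/
def regNormalCone (ip : E → E → ℝ) (C : Set E) (x : E) : Set E :=
  {v | ∀ w ∈ tangentCone C x, ip v w ≤ 0}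

/-- The limiting normal cone to `C` at `x`. -/
def limNormalCone (ip : E → E → ℝ) (C : Set E) (x : E) : Set E :=
  {v | ∃ xs vs : ℕ → E, (∀ k, xs k ∈ C) ∧ (∀ k, vs k ∈ regNormalCone ip C (xs k)) ∧
    Tendsto xs atTop (nhds x) ∧ Tendsto vs atTop (nhds v)}

/-- The critical cone `C_f(x,v)`. -/
def criticalCone (ip : E → E → ℝ) (f : E → EReal) (x v : E) : Set E :=
  {w | subderiv f x w = ((ip v w : ℝ) : EReal)}

/-- `f` is locally Lipschitz continuous at `x` relative to its domain. -/
def LocLipAtRelDom (ip : E → E → ℝ) (f : E → EReal) (x : E) : Prop :=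
  IsFiniteAt f x ∧
    ∃ V ∈ nhds x, ∃ ℓ : ℝ, 0 ≤ ℓ ∧
      ∀ a ∈ V, ∀ b ∈ V, f a ≠ ⊤ → f b ≠ ⊤ →
        f a ≠ ⊥ ∧ f b ≠ ⊥ ∧ |(f a).toReal - (f b).toReal| ≤ ℓ * nrm ip (a - b)

/-- `f` is locally Lipschitz continuous relative to its domain. -/
def LocLipRelDom (ip : E → E → ℝ) (f : E → EReal) : Prop :=
  ∀ x : E, f x ≠ ⊤ → LocLipAtRelDom ip f x

/-- `v` is a proximal subgradient of `f` at `x`. -/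
def ProxSubgrad (ip : E → E → ℝ) (f : E → EReal) (x v : E) : Prop :=
  IsFiniteAt f x ∧
    ∃ r > (0 : ℝ), ∃ ε > (0 : ℝ), ∀ x' : E, nrm ip (x' - x) ≤ ε →
      f x + ((ip v (x' - x) - r / 2 * ip (x' - x) (x' - x) : ℝ) : EReal) ≤ f x'

/-- `f` is prox-regular at `x` for `v`. -/
def ProxRegularAtFor (ip : E → E → ℝ) (f : E → EReal) (x v : E) : Prop :=
  IsFiniteAt f x ∧
    (∃ δ > (0 : ℝ), LowerSemicontinuousOn f {x' | nrm ip (x' - x) < δ}) ∧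
    ∃ ε > (0 : ℝ), ∃ r : ℝ, 0 ≤ r ∧
      ∀ x₁ v₁ : E, LimSubgrad ip f x₁ v₁ → nrm ip (x₁ - x) < ε → nrm ip (v₁ - v) < ε →
        f x₁ < f x + (ε : EReal) →
        ∀ x' : E, nrm ip (x' - x) < ε →
          f x₁ + ((ip v₁ (x' - x₁) - r / 2 * ip (x' - x₁) (x' - x₁) : ℝ) : EReal) ≤ f x'

/-- `f` is prox-regular at `x` (for every subgradient). -/
def ProxRegularAt (ip : E → E → ℝ) (f : E → EReal) (x : E) : Prop :=
  ∀ v : E, LimSubgrad ip f x v → ProxRegularAtFor ip f x v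

/-- `f` is subdifferentially continuous at `x`. -/
def SubdiffContAt (ip : E → E → ℝ) (f : E → EReal) (x : E) : Prop :=
  ∀ v : E, LimSubgrad ip f x v →
    ∀ xs vs : ℕ → E, (∀ k, LimSubgrad ip f (xs k) (vs k)) →
      Tendsto xs atTop (nhds x) → Tendsto vs atTop (nhds v) →
      Tendsto (fun k => f (xs k)) atTop (nhds (f x))

/-- `f` is prox-bounded. -/
def ProxBounded (ip : E → E → ℝ) (f : E → EReal) : Prop :=
  ∃ α c : ℝ, ∀ x : E, (c : EReal) ≤ f x + ((α * ip x x : ℝ) : EReal)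

/-- The proximal mapping (as a set of minimizers). -/
def proxSet (ip : E → E → ℝ) (f : E → EReal) (γ : ℝ) (x : E) : Set E :=
  {w | ∀ w' : E,
    f w + ((1 / (2 * γ) * ip (w - x) (w - x) : ℝ) : EReal) ≤
      f w' + ((1 / (2 * γ) * ip (w' - x) (w' - x) : ℝ) : EReal)}

/-- The proximal map of `f` with parameter `γ` is single-valued around `z` and the resulting
map is directionally differentiable at `z`. -/
def ProxSingleDirDiff (ip : E → E → ℝ) (f : E → EReal) (γ : ℝ) (z : E) : Prop :=
  ∃ V ∈ nhds z, ∃ P : E → E, (∀ u ∈ V, proxSet ip f γ u = {P u}) ∧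
    ∀ h : E, ∃ L : E,
      Tendsto (fun t : ℝ => t⁻¹ • (P (z + t • h) - P z)) (nhdsWithin 0 (Set.Ioi 0)) (nhds L)

/-- The parabolic difference quotient. -/
noncomputable def parabQuot (f : E → EReal) (x w : E) (t : ℝ) (z : E) : EReal :=
  (((2 / t ^ 2) : ℝ) : EReal) *
    (f (x + t • w + (t ^ 2 / 2) • z) - f x - ((t * (subderiv f x w).toReal : ℝ) : EReal))

/-- The parabolic subderivative `d²f(x)(w | z)`. -/
noncomputable def parabSubderiv (f : E → EReal) (x w z : E) : EReal :=
  Filter.liminf (fun p : ℝ × E => parabQuot f x w p.1 p.2)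
    ((nhdsWithin (0 : ℝ) (Set.Ioi 0)) ×ˢ nhds z)

/-- `f` is parabolically epi-differentiable at `x` for `w`. -/
def ParabEpiDiff (f : E → EReal) (x w : E) : Prop :=
  (∃ z : E, parabSubderiv f x w z < ⊤) ∧
    ∀ t : ℕ → ℝ, (∀ k, 0 < t k) → Tendsto t atTop (nhds 0) →
      ∀ z : E, ∃ zs : ℕ → E, Tendsto zs atTop (nhds z) ∧
        Tendsto (fun k => parabQuot f x w (t k) (zs k)) atTop (nhds (parabSubderiv f x w z))

/-- `φ` is a generalized quadratic form: its domain is a linear subspace and on the domain it is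
given by a symmetric linear operator. -/
def IsGQF (ip : E → E → ℝ) (φ : E → EReal) : Prop :=
  (φ 0 ≠ ⊤) ∧
  (∀ x y : E, φ x ≠ ⊤ → φ y ≠ ⊤ → φ (x + y) ≠ ⊤) ∧
  (∀ (c : ℝ) (x : E), φ x ≠ ⊤ → φ (c • x) ≠ ⊤) ∧
  ∃ L : E → E,
    (∀ x y : E, φ x ≠ ⊤ → φ y ≠ ⊤ → L (x + y) = L x + L y) ∧
    (∀ (c : ℝ) (x : E), φ x ≠ ⊤ → L (c • x) = c • L x) ∧
    (∀ x y : E, φ x ≠ ⊤ → φ y ≠ ⊤ → ip (L x) y = ip x (L y)) ∧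
    (∀ x : E, φ x ≠ ⊤ → φ x = ((ip (L x) x : ℝ) : EReal))

/-- `f` is generalized twice differentiable at `x` for `v`. -/
def GenTwiceDiff (ip : E → E → ℝ) (f : E → EReal) (x v : E) : Prop :=
  TwiceEpiDiff ip f x v ∧ IsGQF ip (subderiv2 ip f x v)

/-- Proto-differentiability of a set-valued map `F` at `x` for `y ∈ F x`. -/
def ProtoDiff (F : E → Set E) (x y : E) : Prop :=
  ∀ w η : E, (w, η) ∈ tangentCone {p : E × E | p.2 ∈ F p.1} (x, y) →
    ∀ t : ℕ → ℝ, (∀ k, 0 < t k) → Tendsto t atTop (nhds 0) →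
      ∃ ws ηs : ℕ → E, Tendsto ws atTop (nhds w) ∧ Tendsto ηs atTop (nhds η) ∧
        ∀ k, y + t k • ηs k ∈ F (x + t k • ws k)

/-- Relative interior of a set (interior relative to its affine hull). -/
def relInterior (C : Set E) : Set E :=
  {y | y ∈ C ∧ ∃ V ∈ nhds y, ∀ z ∈ V, z ∈ affineSpan ℝ C → z ∈ C}

/-- A polyhedral set: the intersection of finitely many closed half-spaces. -/
def IsPolyhedral (ip : E → E → ℝ) (C : Set E) : Prop :=
  ∃ (k : ℕ) (a : Fin k → E) (b : Fin k → ℝ), C = {x | ∀ j : Fin k, ip (a j) x ≤ b j}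

/-- The subdifferential of a convex function. -/
def convexSubdiff (ip : E → E → ℝ) (f : E → EReal) (x : E) : Set E :=
  {v | ∀ z : E, f x + ((ip v (z - x) : ℝ) : EReal) ≤ f z}

/-- The natural inner product on `E × ℝ`. -/
def ipProd (ip : E → E → ℝ) : E × ℝ → E × ℝ → ℝ :=
  fun p q => ip p.1 q.1 + p.2 * q.2

/-- The epigraph of `f`. -/
def epiSet (f : E → EReal) : Set (E × ℝ) :=
  {p | f p.1 ≤ (p.2 : EReal)}

/-- `f` is subdifferentially regular at `x`. -/
def SubdiffRegularAt (ip : E → E → ℝ) (f : E → EReal) (x : E) : Prop :=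
  IsFiniteAt f x ∧
    regNormalCone (ipProd ip) (epiSet f) (x, (f x).toReal) =
      limNormalCone (ipProd ip) (epiSet f) (x, (f x).toReal)

/-! Real-valued versions: semidifferentiability, gradients. -/

/-- `f` is semidifferentiable at `x`. -/
def SemiDiffAt (f : E → ℝ) (x : E) : Prop :=
  ∀ w : E, ∃ d : ℝ,
    Tendsto (fun p : ℝ × E => (p.1)⁻¹ * (f (x + p.1 • p.2) - f x))
      ((nhdsWithin (0 : ℝ) (Set.Ioi 0)) ×ˢ nhds w) (nhds d)

/-- The (real value of the) subderivative of a real-valued function. -/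
noncomputable def dReal (f : E → ℝ) (x w : E) : ℝ :=
  (subderiv (fun y => ((f y : ℝ) : EReal)) x w).toReal

/-- The second-order difference quotient built from the subderivative. -/
noncomputable def sdq2R (f : E → ℝ) (x : E) (t : ℝ) (w : E) : ℝ :=
  (2 / t ^ 2) * (f (x + t • w) - f x - t * dReal f x w)

/-- `f` is twice semidifferentiable at `x`. -/
def TwiceSemiDiffAt (f : E → ℝ) (x : E) : Prop :=
  SemiDiffAt f x ∧
    ∀ w : E, ∃ d : ℝ,
      Tendsto (fun p : ℝ × E => sdq2R f x p.1 p.2)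
        ((nhdsWithin (0 : ℝ) (Set.Ioi 0)) ×ˢ nhds w) (nhds d)

/-- The second semiderivative `d²f(x)(w)` (the liminf; it is the full limit whenever `f` is
twice semidifferentiable at `x`). -/
noncomputable def secondSemiDeriv (f : E → ℝ) (x w : E) : EReal :=
  Filter.liminf (fun p : ℝ × E => ((sdq2R f x p.1 p.2 : ℝ) : EReal))
    ((nhdsWithin (0 : ℝ) (Set.Ioi 0)) ×ˢ nhds w)

/-- `f` is (Fréchet) differentiable at `x` with gradient `g` (w.r.t. inner product `ip`). -/
def HasGradAt (ip : E → E → ℝ) (f : E → ℝ) (x g : E) : Prop :=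
  Tendsto (fun y : E => (nrm ip (y - x))⁻¹ * (f y - f x - ip g (y - x)))
    (nhdsWithin x {x}ᶜ) (nhds 0)

/-- `f` is locally Lipschitz continuous around `x`. -/
def LocLipAt (ip : E → E → ℝ) (f : E → ℝ) (x : E) : Prop :=
  ∃ V ∈ nhds x, ∃ ℓ : ℝ, 0 ≤ ℓ ∧ ∀ a ∈ V, ∀ b ∈ V, |f a - f b| ≤ ℓ * nrm ip (a - b)

/-- `f` is twice differentiable at `x` with gradient map `G` near `x` and second derivative
(the derivative of `G` at `x`) given by the linear map `Dxx`. -/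
def HasSecondDerivAt (ip : E → E → ℝ) (f : E → EReal) (x : E) (G : E → E) (Dxx : E → E) :
    Prop :=
  ∃ V ∈ nhds x, ∃ fr : E → ℝ,
    (∀ z ∈ V, f z = ((fr z : ℝ) : EReal)) ∧
    (∀ z ∈ V, HasGradAt ip fr z (G z)) ∧
    IsLinearMap ℝ Dxx ∧
    Tendsto (fun z : E => (nrm ip (z - x))⁻¹ • (G z - G x - Dxx (z - x)))
      (nhdsWithin x {x}ᶜ) (nhds 0)

/-- `f` is twice differentiable at `x`. -/
def TwiceDiffAt (ip : E → E → ℝ) (f : E → EReal) (x : E) : Prop :=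
  ∃ G Dxx : E → E, HasSecondDerivAt ip f x G Dxx

end Generic

/-! ## Eigenvalues and spectral machinery -/

open scoped Classical in
/-- The eigenvalues of a real symmetric matrix, arranged in nonincreasing order
(junk value `0` if the matrix is not symmetric). -/
noncomputable def eigval {n : ℕ} (X : Matrix (Fin n) (Fin n) ℝ) : Fin n → ℝ :=
  if h : X.IsHermitian then
    fun i => h.eigenvalues (Tuple.sort (fun j => -h.eigenvalues j) i)
  else 0

/-- `Oⁿ(X)`: orthogonal matrices realizing the ordered spectral decomposition of `X`. -/
def eigOrth {n : ℕ} (X : Matrix (Fin n) (Fin n) ℝ) : Set (Matrix (Fin n) (Fin n) ℝ) :=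
  {U | U * Uᵀ = 1 ∧ X = U * Matrix.diagonal (eigval X) * Uᵀ}

open scoped Classical in
/-- The block `α_m` of indices `j` whose eigenvalue `λ_j(X)` equals `λ_i(X)`. -/
noncomputable def blockSet {n : ℕ} (X : Matrix (Fin n) (Fin n) ℝ) (i : Fin n) :
    Finset (Fin n) :=
  Finset.univ.filter fun j => eigval X j = eigval X i

lemma mem_blockSet_self {n : ℕ} (X : Matrix (Fin n) (Fin n) ℝ) (i : Fin n) :
    i ∈ blockSet X i := by
  simp [blockSet]

/-- The increasing enumeration of the block of `i`. -/
noncomputable def blockEmb {n : ℕ} (X : Matrix (Fin n) (Fin n) ℝ) (i : Fin n) :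
    Fin (blockSet X i).card → Fin n :=
  fun a => ((blockSet X i).orderIsoOfFin rfl a : Fin n)

/-- The position of `i` inside its own block. -/
noncomputable def blockIdx {n : ℕ} (X : Matrix (Fin n) (Fin n) ℝ) (i : Fin n) :
    Fin (blockSet X i).card :=
  ((blockSet X i).orderIsoOfFin rfl).symm ⟨i, mem_blockSet_self X i⟩

/-- The principal submatrix of `M` corresponding to the block of `i` (for `X`). -/
noncomputable def blockMat {n : ℕ} (X M : Matrix (Fin n) (Fin n) ℝ) (i : Fin n) :
    Matrix (Fin (blockSet X i).card) (Fin (blockSet X i).card) ℝ :=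
  Matrix.of fun a b => M (blockEmb X i a) (blockEmb X i b)

/-- The directional derivative `λ'(X;H)` of the ordered eigenvalue map, computed through
`U ∈ Oⁿ(X)`: blockwise ordered eigenvalues of `U_{α_m}ᵀ H U_{α_m}`. -/
noncomputable def lambdaDir {n : ℕ} (X U H : Matrix (Fin n) (Fin n) ℝ) : Fin n → ℝ :=
  fun i => eigval (blockMat X (Uᵀ * H * U) i) (blockIdx X i)

open scoped Classical in
/-- The Moore–Penrose pseudoinverse of a square real matrix, characterized by the four
Penrose equations. -/
noncomputable def pinv {n : ℕ} (A : Matrix (Fin n) (Fin n) ℝ) :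
    Matrix (Fin n) (Fin n) ℝ :=
  if h : ∃ B : Matrix (Fin n) (Fin n) ℝ,
      A * B * A = A ∧ B * A * B = B ∧ (A * B)ᵀ = A * B ∧ (B * A)ᵀ = B * A
  then h.choose else 0

/-- The curvature term `2 ∑ₘ ⟨Diag(y)_{αₘαₘ}, U_{αₘ}ᵀ H (μₘ I - X)† H U_{αₘ}⟩`, written as a
single sum over all indices. -/
noncomputable def curvTerm {n : ℕ} (X U H : Matrix (Fin n) (Fin n) ℝ) (y : Fin n → ℝ) : ℝ :=
  2 * ∑ i : Fin n, y i *
    (Uᵀ * (H * pinv (eigval X i • (1 : Matrix (Fin n) (Fin n) ℝ) - X) * H) * U) i i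

/-- Two symmetric matrices admit a simultaneous ordered spectral decomposition. -/
def simOrdSpec {k : ℕ} (A B : Matrix (Fin k) (Fin k) ℝ) : Prop :=
  ∃ P : Matrix (Fin k) (Fin k) ℝ, P * Pᵀ = 1 ∧
    A = P * Matrix.diagonal (eigval A) * Pᵀ ∧
    B = P * Matrix.diagonal (eigval B) * Pᵀ

/-- The subspace of symmetric `n × n` real matrices. -/
def symSubmodule (n : ℕ) : Submodule ℝ (Matrix (Fin n) (Fin n) ℝ) where
  carrier := {A | A.IsSymm}
  add_mem' := by
    intro a b ha hb
    simp only [Set.mem_setOf_eq, Matrix.IsSymm] at *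
    rw [Matrix.transpose_add, ha, hb]
  zero_mem' := by
    simp only [Set.mem_setOf_eq, Matrix.IsSymm, Matrix.transpose_zero]
  smul_mem' := by
    intro c a ha
    simp only [Set.mem_setOf_eq, Matrix.IsSymm] at *
    rw [Matrix.transpose_smul, ha]

/-- The space `Sⁿ` of symmetric `n × n` real matrices. -/
abbrev Sym (n : ℕ) : Type := ↥(symSubmodule n)

/-- The trace inner product `⟨A, B⟩ = tr(AB)` on `Sⁿ`. -/
noncomputable def ipM {n : ℕ} (A B : Sym n) : ℝ :=
  ((A : Matrix (Fin n) (Fin n) ℝ) * (B : Matrix (Fin n) (Fin n) ℝ)).trace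

/-- The Euclidean inner product on `ℝⁿ`. -/
def ipV {n : ℕ} (v w : Fin n → ℝ) : ℝ :=
  ∑ i, v i * w i

/-- The spectral function `g = θ ∘ λ` on `Sⁿ`. -/
noncomputable def specFn {n : ℕ} (θ : (Fin n → ℝ) → EReal) : Sym n → EReal :=
  fun A => θ (eigval (A : Matrix (Fin n) (Fin n) ℝ))

/-- A function on `ℝⁿ` is symmetric (permutation invariant). -/
def SymmetricFn {n : ℕ} {α : Type*} (θ : (Fin n → ℝ) → α) : Prop :=
  ∀ (x : Fin n → ℝ) (σ : Equiv.Perm (Fin n)), θ (fun i => x (σ i)) = θ x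

/-- The diagonal matrix `Diag(w)` as an element of `Sⁿ`. -/
noncomputable def diagSym {n : ℕ} (w : Fin n → ℝ) : Sym n :=
  ⟨Matrix.diagonal w, Matrix.isSymm_diagonal w⟩

/-- The `i`-th order statistic: `orderStat x i` is the `i`-th largest entry of `x`. -/
noncomputable def orderStat {n : ℕ} (x : Fin n → ℝ) : Fin n → ℝ :=
  fun i => x (Tuple.sort (fun j => -x j) i)


/-! ## Linear algebra -/

lemma conj_diag_apply {n : ℕ} (R : Matrix (Fin n) (Fin n) ℝ) (d : Fin n → ℝ) (i j : Fin n) :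
    (R * Matrix.diagonal d * Rᵀ) i j = ∑ k, R i k * d k * R j k := by
  rw [Matrix.mul_apply]
  refine Finset.sum_congr rfl fun k _ => ?_
  rw [Matrix.mul_diagonal, Matrix.transpose_apply]

lemma perm_cols {n : ℕ} (R : Matrix (Fin n) (Fin n) ℝ) (d : Fin n → ℝ)
    (τ : Equiv.Perm (Fin n)) :
    (R.submatrix id τ) * Matrix.diagonal (fun i => d (τ i)) * (R.submatrix id τ)ᵀ
      = R * Matrix.diagonal d * Rᵀ := by
  ext i j
  rw [conj_diag_apply, conj_diag_apply]
  simp only [Matrix.submatrix_apply, id]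
  exact Equiv.sum_comp τ (fun k => R i k * d k * R j k)

lemma perm_cols_orth {n : ℕ} {R : Matrix (Fin n) (Fin n) ℝ} (hR : R * Rᵀ = 1)
    (τ : Equiv.Perm (Fin n)) :
    (R.submatrix id τ) * (R.submatrix id τ)ᵀ = 1 := by
  have := perm_cols R (fun _ => 1) τ
  simpa [hR] using this

lemma orth_comm {n : ℕ} {R : Matrix (Fin n) (Fin n) ℝ} (hR : R * Rᵀ = 1) : Rᵀ * R = 1 :=
  mul_eq_one_comm.mp hR

lemma fan_core {n : ℕ} {S : Matrix (Fin n) (Fin n) ℝ} (hS : S * Sᵀ = 1)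
    {a z : Fin n → ℝ} (ha : Antitone a) (hz : Antitone z) :
    ∑ i, ∑ j, a i * (S i j) ^ 2 * z j ≤ ∑ i, a i * z i := by
  have hds : (Matrix.of fun i j => (S i j) ^ 2) ∈ doublyStochastic ℝ (Fin n) := by
    rw [mem_doublyStochastic_iff_sum]
    refine ⟨fun i j => sq_nonneg _, fun i => ?_, fun j => ?_⟩
    · have := congrFun (congrFun hS i) i
      simpa [Matrix.mul_apply, sq] using this
    · have := congrFun (congrFun (orth_comm hS) j) j
      simpa [Matrix.mul_apply, sq] using this
  obtain ⟨w, hw0, hw1, hw⟩ := exists_eq_sum_perm_of_mem_doublyStochastic hds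
  have hent : ∀ i j, (S i j) ^ 2 = ∑ σ : Equiv.Perm (Fin n), w σ * (if σ i = j then 1 else 0) := by
    intro i j
    have := congrFun (congrFun hw i) j
    simp only [Matrix.of_apply] at this
    rw [← this, Matrix.sum_apply]
    refine Finset.sum_congr rfl fun σ _ => ?_
    simp [Equiv.Perm.permMatrix, PEquiv.toMatrix_apply, Equiv.toPEquiv_apply, eq_comm]
  have h1 : ∑ i, ∑ j, a i * (S i j) ^ 2 * z j
      = ∑ σ : Equiv.Perm (Fin n), w σ * ∑ i, a i * z (σ i) := by
    simp_rw [hent, Finset.mul_sum, Finset.sum_mul]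
    calc _ = ∑ i, ∑ σ : Equiv.Perm (Fin n), ∑ j,
          a i * (w σ * (if σ i = j then 1 else 0)) * z j := by
          refine Finset.sum_congr rfl fun i _ => Finset.sum_comm
      _ = ∑ σ : Equiv.Perm (Fin n), ∑ i, ∑ j,
          a i * (w σ * (if σ i = j then 1 else 0)) * z j := Finset.sum_comm
      _ = _ := by
          refine Finset.sum_congr rfl fun σ _ => Finset.sum_congr rfl fun i _ => ?_
          simp
          ring
  rw [h1]
  calc _ ≤ ∑ σ : Equiv.Perm (Fin n), w σ * ∑ i, a i * z i := by
        refine Finset.sum_le_sum fun σ _ => mul_le_mul_of_nonneg_left ?_ (hw0 σ)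
        exact (ha.monovary hz).sum_mul_comp_perm_le_sum_mul
    _ = _ := by rw [← Finset.sum_mul, hw1, one_mul]

lemma trace_conj_conj {n : ℕ} (R V : Matrix (Fin n) (Fin n) ℝ) (a z : Fin n → ℝ) :
    ((V * Matrix.diagonal a * Vᵀ) * (R * Matrix.diagonal z * Rᵀ)).trace
      = ∑ i, ∑ j, a i * ((Vᵀ * R) i j) ^ 2 * z j := by
  have : ((V * Matrix.diagonal a * Vᵀ) * (R * Matrix.diagonal z * Rᵀ)).trace
      = (Matrix.diagonal a * ((Vᵀ * R) * Matrix.diagonal z * (Vᵀ * R)ᵀ)).trace := by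
    rw [Matrix.transpose_mul, Matrix.transpose_transpose]
    simp only [Matrix.mul_assoc]
    rw [Matrix.trace_mul_comm V]
    simp only [Matrix.mul_assoc]
  rw [this, Matrix.trace]
  refine Finset.sum_congr rfl fun i _ => ?_
  rw [Matrix.diag_apply, Matrix.diagonal_mul, conj_diag_apply, Finset.mul_sum]
  refine Finset.sum_congr rfl fun j _ => ?_
  ring

lemma orth_mul {n : ℕ} {R V : Matrix (Fin n) (Fin n) ℝ} (hR : R * Rᵀ = 1) (hV : V * Vᵀ = 1) :
    (V * R) * (V * R)ᵀ = 1 := by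
  rw [Matrix.transpose_mul, Matrix.mul_assoc, ← Matrix.mul_assoc R, hR, Matrix.one_mul, hV]

lemma orth_transpose {n : ℕ} {R : Matrix (Fin n) (Fin n) ℝ} (hR : R * Rᵀ = 1) :
    Rᵀ * Rᵀᵀ = 1 := by
  rw [Matrix.transpose_transpose]; exact orth_comm hR

lemma fan_sorted {n : ℕ} {R V : Matrix (Fin n) (Fin n) ℝ} (hR : R * Rᵀ = 1) (hV : V * Vᵀ = 1)
    {a z : Fin n → ℝ} (ha : Antitone a) (hz : Antitone z) :
    ((V * Matrix.diagonal a * Vᵀ) * (R * Matrix.diagonal z * Rᵀ)).trace ≤ ∑ i, a i * z i := by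
  rw [trace_conj_conj]
  exact fan_core (orth_mul hR (orth_transpose hV)) ha hz

lemma trace_sq_conj {n : ℕ} {R : Matrix (Fin n) (Fin n) ℝ} (hR : R * Rᵀ = 1) (a b : Fin n → ℝ) :
    ((R * Matrix.diagonal a * Rᵀ) * (R * Matrix.diagonal b * Rᵀ)).trace = ∑ i, a i * b i := by
  rw [trace_conj_conj, orth_comm hR]
  simp [Matrix.one_apply]

/-- uniqueness of the ordered spectrum -/
lemma sorted_unique {n : ℕ} {R V : Matrix (Fin n) (Fin n) ℝ} (hR : R * Rᵀ = 1) (hV : V * Vᵀ = 1)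
    {a z : Fin n → ℝ} (ha : Antitone a) (hz : Antitone z)
    (h : V * Matrix.diagonal a * Vᵀ = R * Matrix.diagonal z * Rᵀ) : a = z := by
  have h1 := fan_sorted hR hV ha hz
  have h2 := trace_sq_conj hR z z
  have h3 := trace_sq_conj hV a a
  rw [h] at h1 h3
  have h4 : ∑ i, (a i - z i) ^ 2 = 0 := by
    refine le_antisymm ?_ (Finset.sum_nonneg fun i _ => sq_nonneg _)
    have : ∑ i, (a i - z i) ^ 2 = ∑ i, a i * a i - 2 * ∑ i, a i * z i + ∑ i, z i * z i := by
      rw [Finset.mul_sum, ← Finset.sum_sub_distrib, ← Finset.sum_add_distrib]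
      refine Finset.sum_congr rfl fun i _ => by ring
    linarith
  rw [Finset.sum_eq_zero_iff_of_nonneg fun i _ => sq_nonneg _] at h4
  funext i
  have := h4 i (Finset.mem_univ i)
  nlinarith [pow_eq_zero_iff (two_ne_zero) |>.mp this]

lemma eigval_antitone {n : ℕ} (X : Matrix (Fin n) (Fin n) ℝ) : Antitone (eigval X) := by
  unfold eigval
  split_ifs with h
  · have := Tuple.monotone_sort (fun j => -h.eigenvalues j)
    intro i j hij
    have := this hij
    simpa using this
  · exact antitone_const

lemma exists_eigOrth {n : ℕ} {X : Matrix (Fin n) (Fin n) ℝ} (hX : X.IsSymm) :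
    ∃ R : Matrix (Fin n) (Fin n) ℝ, R * Rᵀ = 1 ∧ X = R * Matrix.diagonal (eigval X) * Rᵀ := by
  have h : X.IsHermitian := by
    rw [Matrix.IsHermitian, Matrix.conjTranspose_eq_transpose_of_trivial]; exact hX
  have hs := h.spectral_theorem
  rw [Unitary.conjStarAlgAut_apply] at hs
  set W : Matrix (Fin n) (Fin n) ℝ := (h.eigenvectorUnitary : Matrix (Fin n) (Fin n) ℝ) with hW
  have hst : star W = Wᵀ := by
    rw [Matrix.star_eq_conjTranspose, Matrix.conjTranspose_eq_transpose_of_trivial]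
  have hWo : W * Wᵀ = 1 := by
    rw [← hst]; exact Unitary.mul_star_self_of_mem h.eigenvectorUnitary.2
  have hs' : X = W * Matrix.diagonal h.eigenvalues * Wᵀ := by
    rw [← hst]; exact hs
  refine ⟨W.submatrix id (Tuple.sort (fun j => -h.eigenvalues j)), perm_cols_orth hWo _, ?_⟩
  have he : eigval X = fun i => h.eigenvalues (Tuple.sort (fun j => -h.eigenvalues j) i) := by
    unfold eigval; rw [dif_pos h]
  rw [he, perm_cols, ← hs']

lemma isSymm_conj {n : ℕ} (R : Matrix (Fin n) (Fin n) ℝ) (d : Fin n → ℝ) :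
    (R * Matrix.diagonal d * Rᵀ).IsSymm := by
  rw [Matrix.IsSymm]
  simp [Matrix.transpose_mul, Matrix.mul_assoc]

lemma eigval_eq_of_conj {n : ℕ} {R : Matrix (Fin n) (Fin n) ℝ} (hR : R * Rᵀ = 1)
    {d : Fin n → ℝ} (hd : Antitone d) : eigval (R * Matrix.diagonal d * Rᵀ) = d := by
  obtain ⟨V, hV, hVe⟩ := exists_eigOrth (isSymm_conj R d)
  exact sorted_unique hR hV (eigval_antitone _) hd hVe.symm

lemma eigval_conj_perm {n : ℕ} {R : Matrix (Fin n) (Fin n) ℝ} (hR : R * Rᵀ = 1)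
    (d : Fin n → ℝ) : ∃ τ : Equiv.Perm (Fin n),
      eigval (R * Matrix.diagonal d * Rᵀ) = fun i => d (τ i) := by
  refine ⟨Tuple.sort (fun j => -d j), ?_⟩
  rw [← perm_cols R d (Tuple.sort (fun j => -d j))]
  apply eigval_eq_of_conj (perm_cols_orth hR _)
  intro i j hij
  have := Tuple.monotone_sort (fun j => -d j) hij
  simpa using this

/-- the Fan inequality, with an unsorted first vector. -/
lemma fan_perm {n : ℕ} {V Z : Matrix (Fin n) (Fin n) ℝ} (hZ : Z.IsSymm) (hV : V * Vᵀ = 1)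
    (d : Fin n → ℝ) (σ : Equiv.Perm (Fin n)) (hd : Antitone (fun i => d (σ i))) :
    ((V * Matrix.diagonal d * Vᵀ) * Z).trace ≤ ∑ i, d (σ i) * eigval Z i := by
  obtain ⟨R, hR, hRe⟩ := exists_eigOrth hZ
  have := fan_sorted hR (perm_cols_orth hV σ) hd (eigval_antitone Z)
  rwa [perm_cols, ← hRe] at this

lemma trace_sq_eigval {n : ℕ} {Z : Matrix (Fin n) (Fin n) ℝ} (hZ : Z.IsSymm) :
    (Z * Z).trace = ∑ i, eigval Z i * eigval Z i := by
  obtain ⟨R, hR, hRe⟩ := exists_eigOrth hZ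
  rw [← trace_sq_conj hR, ← hRe]

lemma eq_zero_of_trace_sq {n : ℕ} {Z : Matrix (Fin n) (Fin n) ℝ} (h : (Z * Zᵀ).trace ≤ 0) :
    Z = 0 := by
  rw [← Matrix.trace_mul_conjTranspose_self_eq_zero_iff,
    Matrix.conjTranspose_eq_transpose_of_trivial]
  refine le_antisymm h ?_
  rw [Matrix.trace]
  refine Finset.sum_nonneg fun i _ => ?_
  rw [Matrix.diag_apply, Matrix.mul_apply]
  exact Finset.sum_nonneg fun j _ => mul_self_nonneg _

/-- Equality case of the Fan inequality. -/
lemma fan_eq {n : ℕ} {Q₁ Q₂ : Matrix (Fin n) (Fin n) ℝ} (hQ₁ : Q₁ * Q₁ᵀ = 1) (hQ₂ : Q₂ * Q₂ᵀ = 1)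
    {A B : Matrix (Fin n) (Fin n) ℝ} {a b : Fin n → ℝ} (ha : Antitone a) (hb : Antitone b)
    (hA : A = Q₁ * Matrix.diagonal a * Q₁ᵀ) (hB : B = Q₂ * Matrix.diagonal b * Q₂ᵀ)
    (hAB : (A * B).trace = ∑ i, a i * b i) :
    ∃ P : Matrix (Fin n) (Fin n) ℝ, P * Pᵀ = 1 ∧ A = P * Matrix.diagonal a * Pᵀ ∧
      B = P * Matrix.diagonal b * Pᵀ := by
  have hAs : A.IsSymm := hA ▸ isSymm_conj _ _
  have hBs : B.IsSymm := hB ▸ isSymm_conj _ _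
  obtain ⟨P, hP, hPe⟩ := exists_eigOrth (hAs.add hBs)
  set e := eigval (A + B) with he
  have hAA : (A * A).trace = ∑ i, a i * a i := by rw [hA]; exact trace_sq_conj hQ₁ a a
  have hBB : (B * B).trace = ∑ i, b i * b i := by rw [hB]; exact trace_sq_conj hQ₂ b b
  have hBA : (B * A).trace = ∑ i, a i * b i := by rw [Matrix.trace_mul_comm, hAB]
  have hCC : ((A + B) * (A + B)).trace = ∑ i, e i * e i := trace_sq_eigval (hAs.add hBs)
  have hAC : (A * (A + B)).trace ≤ ∑ i, a i * e i := by
    have := fan_sorted hP hQ₁ ha (eigval_antitone (A + B))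
    rwa [← hA, ← hPe] at this
  have hBC : (B * (A + B)).trace ≤ ∑ i, b i * e i := by
    have := fan_sorted hP hQ₂ hb (eigval_antitone (A + B))
    rwa [← hB, ← hPe] at this
  have hCexp : ((A + B) * (A + B)).trace = (A * A).trace + (A * B).trace + ((B * A).trace
      + (B * B).trace) := by
    rw [Matrix.add_mul, Matrix.mul_add, Matrix.mul_add]; simp only [Matrix.trace_add]
  rw [Matrix.mul_add, Matrix.trace_add] at hAC hBC
  have h4 : ∑ i, (a i + b i - e i) ^ 2 = 0 := by
    refine le_antisymm ?_ (Finset.sum_nonneg fun i _ => sq_nonneg _)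
    have : ∑ i, (a i + b i - e i) ^ 2 = ∑ i, a i * a i + 2 * ∑ i, a i * b i + ∑ i, b i * b i
        - 2 * ∑ i, a i * e i - 2 * ∑ i, b i * e i + ∑ i, e i * e i := by
      simp only [Finset.mul_sum, ← Finset.sum_sub_distrib, ← Finset.sum_add_distrib]
      refine Finset.sum_congr rfl fun i _ => by ring
    linarith
  rw [Finset.sum_eq_zero_iff_of_nonneg fun i _ => sq_nonneg _] at h4
  have hee : e = a + b := by
    funext i
    have := pow_eq_zero_iff (two_ne_zero) |>.mp (h4 i (Finset.mem_univ i))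
    simp only [Pi.add_apply]; linarith
  have hC : A + B = P * Matrix.diagonal a * Pᵀ + P * Matrix.diagonal b * Pᵀ := by
    rw [← Matrix.add_mul, ← Matrix.mul_add, Matrix.diagonal_add]
    rw [hPe, hee]; rfl
  set A' := P * Matrix.diagonal a * Pᵀ with hA'
  set B' := P * Matrix.diagonal b * Pᵀ with hB'
  have h5 : (A * B').trace ≤ ∑ i, a i * b i := by
    rw [hA]; exact fan_sorted hP hQ₁ ha hb
  have h6 : (A * A').trace + (A * B').trace = (A * A).trace + (A * B).trace := by
    rw [← Matrix.trace_add, ← Matrix.trace_add, ← Matrix.mul_add, ← Matrix.mul_add, hC]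
  have h7 : (A' * A').trace = ∑ i, a i * a i := trace_sq_conj hP a a
  have hA's : A'.IsSymm := isSymm_conj _ _
  have h8 : A - A' = 0 := by
    apply eq_zero_of_trace_sq
    rw [Matrix.transpose_sub, hAs.eq, hA's.eq, Matrix.sub_mul, Matrix.mul_sub, Matrix.mul_sub]
    simp only [Matrix.trace_sub]
    rw [Matrix.trace_mul_comm A' A]
    linarith
  have h9 : A = A' := sub_eq_zero.mp h8
  refine ⟨P, hP, h9, ?_⟩
  rw [← h9] at hC
  exact add_left_cancel hC

lemma lambdaDir_unique {n : ℕ} (X M Q : Matrix (Fin n) (Fin n) ℝ) (w : Fin n → ℝ)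
    (hQ : Q * Qᵀ = 1) (hQb : ∀ i j, eigval X i ≠ eigval X j → Q i j = 0)
    (hMQ : ∀ i j, eigval X i = eigval X j → (M * Q) i j = Q i j * w j)
    (hw : ∀ i j, i ≤ j → eigval X i = eigval X j → w j ≤ w i) (i : Fin n) :
    eigval (blockMat X M i) (blockIdx X i) = w i := by
  set e := blockEmb X i with he
  have hemem : ∀ a, eigval X (e a) = eigval X i := by
    intro a
    have h : e a ∈ blockSet X i := ((blockSet X i).orderIsoOfFin rfl a).2
    rw [blockSet, Finset.mem_filter] at h
    exact h.2
  have hei : e (blockIdx X i) = i := by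
    simp [he, blockEmb, blockIdx]
  have hmono : Monotone e := by
    intro a b hab
    have := ((blockSet X i).orderIsoOfFin rfl).monotone hab
    exact this
  have hinj : Function.Injective e := by
    intro a b hab
    have := ((blockSet X i).orderIsoOfFin rfl).injective (Subtype.ext hab)
    exact this
  have hsum : ∀ f : Fin n → ℝ, (∀ k, eigval X k ≠ eigval X i → f k = 0) →
      ∑ a, f (e a) = ∑ k, f k := by
    intro f hf
    have h1 : ∑ k, f k = ∑ k ∈ blockSet X i, f k := by
      symm
      apply Finset.sum_subset (Finset.subset_univ _)
      intro k _ hk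
      apply hf
      intro h
      exact hk (by simp [blockSet, h])
    rw [h1, ← Finset.sum_coe_sort (blockSet X i)]
    exact Equiv.sum_comp ((blockSet X i).orderIsoOfFin rfl).toEquiv
      (fun k : blockSet X i => f k)
  set Q' := Q.submatrix e e with hQ'
  have hQ'o : Q' * Q'ᵀ = 1 := by
    ext a b
    rw [Matrix.mul_apply]
    simp only [hQ', Matrix.transpose_apply, Matrix.submatrix_apply]
    rw [hsum (fun k => Q (e a) k * Q (e b) k)]
    · have := congrFun (congrFun hQ (e a)) (e b)
      rw [Matrix.mul_apply] at this
      simp only [Matrix.transpose_apply] at this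
      rw [this, Matrix.one_apply, Matrix.one_apply]
      simp [hinj.eq_iff]
    · intro k hk
      rw [hQb (e a) k (by rw [hemem]; exact fun h => hk h.symm), zero_mul]
  have hMQ' : blockMat X M i * Q' = Q' * Matrix.diagonal (fun a => w (e a)) := by
    ext a b
    rw [Matrix.mul_diagonal, Matrix.mul_apply]
    simp only [hQ', Matrix.submatrix_apply, blockMat, Matrix.of_apply]
    rw [← hMQ (e a) (e b) (by rw [hemem, hemem]), Matrix.mul_apply]
    rw [← hsum (fun k => M (e a) k * Q k (e b))]
    intro k hk
    rw [hQb k (e b) (by rw [hemem]; exact hk), mul_zero]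
  have hM' : blockMat X M i = Q' * Matrix.diagonal (fun a => w (e a)) * Q'ᵀ := by
    rw [← hMQ', Matrix.mul_assoc, hQ'o, Matrix.mul_one]
  rw [hM', eigval_eq_of_conj hQ'o, hei]
  intro a b hab
  exact hw _ _ (hmono hab) (by rw [hemem, hemem])

lemma pinv_eq {n : ℕ} (A B : Matrix (Fin n) (Fin n) ℝ)
    (h : A * B * A = A ∧ B * A * B = B ∧ (A * B)ᵀ = A * B ∧ (B * A)ᵀ = B * A) : pinv A = B := by
  have hex : ∃ B : Matrix (Fin n) (Fin n) ℝ,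
      A * B * A = A ∧ B * A * B = B ∧ (A * B)ᵀ = A * B ∧ (B * A)ᵀ = B * A := ⟨B, h⟩
  unfold pinv
  rw [dif_pos hex]
  obtain ⟨g1, g2, g3, g4⟩ := hex.choose_spec
  set C := hex.choose
  obtain ⟨h1, h2, h3, h4⟩ := h
  have e1 : A * B = A * C := by
    calc A * B = (A * C) * (A * B) := by rw [← Matrix.mul_assoc, g1]
      _ = (A * C)ᵀ * (A * B)ᵀ := by rw [g3, h3]
      _ = ((A * B) * (A * C))ᵀ := (Matrix.transpose_mul _ _).symm
      _ = (A * C)ᵀ := by rw [← Matrix.mul_assoc, h1]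
      _ = A * C := g3
  have e2 : B * A = C * A := by
    calc B * A = (B * A) * (C * A) := by
          rw [Matrix.mul_assoc, ← Matrix.mul_assoc A C A, g1]
      _ = (B * A)ᵀ * (C * A)ᵀ := by rw [g4, h4]
      _ = ((C * A) * (B * A))ᵀ := (Matrix.transpose_mul _ _).symm
      _ = (C * A)ᵀ := by rw [Matrix.mul_assoc, ← Matrix.mul_assoc A B A, h1]
      _ = C * A := g4
  calc C = C * A * C := g2.symm
    _ = B * A * C := by rw [e2]
    _ = B * A * B := by rw [Matrix.mul_assoc, ← e1, Matrix.mul_assoc]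
    _ = B := h2

lemma pinv_diag {n : ℕ} {U : Matrix (Fin n) (Fin n) ℝ} (hU : U * Uᵀ = 1) (d : Fin n → ℝ) :
    pinv (U * Matrix.diagonal d * Uᵀ) = U * Matrix.diagonal (fun i => (d i)⁻¹) * Uᵀ := by
  have hm : ∀ a b : Fin n → ℝ, (U * Matrix.diagonal a * Uᵀ) * (U * Matrix.diagonal b * Uᵀ)
      = U * Matrix.diagonal (fun i => a i * b i) * Uᵀ := by
    intro a b
    rw [← Matrix.diagonal_mul_diagonal]
    calc _ = U * Matrix.diagonal a * (Uᵀ * U) * Matrix.diagonal b * Uᵀ := by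
          simp only [Matrix.mul_assoc]
      _ = _ := by rw [orth_comm hU, Matrix.mul_one]; simp only [Matrix.mul_assoc]
  have key : ∀ x : ℝ, x * x⁻¹ * x = x := fun x => by
    by_cases hx : x = 0
    · simp [hx]
    · field_simp
  apply pinv_eq
  simp only [hm]
  refine ⟨?_, ?_, isSymm_conj _ _, isSymm_conj _ _⟩
  · simp_rw [key]
  · have : ∀ x : ℝ, x⁻¹ * x * x⁻¹ = x⁻¹ := fun x => by simpa using key x⁻¹
    simp_rw [this]

lemma trace_comm_diag {n : ℕ} (K M : Matrix (Fin n) (Fin n) ℝ) (d : Fin n → ℝ) :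
    ((K * Matrix.diagonal d - Matrix.diagonal d * K) * M).trace
      = ∑ i, ∑ j, K i j * (d j - d i) * M j i := by
  rw [Matrix.trace]
  refine Finset.sum_congr rfl fun i _ => ?_
  rw [Matrix.diag_apply, Matrix.mul_apply]
  refine Finset.sum_congr rfl fun j _ => ?_
  rw [Matrix.sub_apply, Matrix.mul_diagonal, Matrix.diagonal_mul]
  ring

/-- generator of the optimal rotation -/
def genK {n : ℕ} (l : Fin n → ℝ) (G : Matrix (Fin n) (Fin n) ℝ) : Matrix (Fin n) (Fin n) ℝ :=
  Matrix.of fun i j => G i j * (l j - l i)⁻¹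

lemma genK_skew {n : ℕ} (l : Fin n → ℝ) {G : Matrix (Fin n) (Fin n) ℝ} (hG : G.IsSymm) :
    (genK l G)ᵀ = -genK l G := by
  ext i j
  simp only [genK, Matrix.transpose_apply, Matrix.of_apply, Matrix.neg_apply]
  rw [hG.apply i j, ← neg_sub (l j) (l i), inv_neg]; ring

lemma curvTerm_eq {n : ℕ} {X U H : Matrix (Fin n) (Fin n) ℝ} (y : Fin n → ℝ)
    (hU : U ∈ eigOrth X) (hH : H.IsSymm) :
    curvTerm X U H y = ((genK (eigval X) (Uᵀ * H * U) * Matrix.diagonal y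
      - Matrix.diagonal y * genK (eigval X) (Uᵀ * H * U)) * (Uᵀ * H * U)).trace := by
  obtain ⟨hUo, hX⟩ := hU
  set l := eigval X with hl
  set G := Uᵀ * H * U with hG
  have hGs : G.IsSymm := by
    rw [Matrix.IsSymm, hG]; simp [Matrix.transpose_mul, Matrix.mul_assoc, hH.eq]
  have h1 : ∀ i, (Uᵀ * (H * pinv (l i • (1 : Matrix (Fin n) (Fin n) ℝ) - X) * H) * U) i i
      = ∑ j, G i j * (l i - l j)⁻¹ * G i j := by
    intro i
    have e1 : l i • (1 : Matrix (Fin n) (Fin n) ℝ) - X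
        = U * Matrix.diagonal (fun j => l i - l j) * Uᵀ := by
      have : Matrix.diagonal (fun j => l i - l j)
          = l i • (1 : Matrix (Fin n) (Fin n) ℝ) - Matrix.diagonal l := by
        ext a b
        by_cases hab : a = b
        · subst hab; simp
        · simp [hab]
      rw [this, Matrix.mul_sub, Matrix.sub_mul, ← hX]
      simp [hUo]
    rw [e1, pinv_diag hUo]
    have e2 : Uᵀ * (H * (U * Matrix.diagonal (fun j => (l i - l j)⁻¹) * Uᵀ) * H) * U
        = G * Matrix.diagonal (fun j => (l i - l j)⁻¹) * Gᵀ := by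
      rw [hGs.eq, hG]; simp only [Matrix.mul_assoc]
    rw [e2, conj_diag_apply]
  rw [trace_comm_diag, curvTerm]
  simp_rw [← hl, h1]
  have h2 : ∑ i, ∑ j, genK l G i j * (y j - y i) * G j i
      = ∑ i, ∑ j, (y j * (G j i * (l j - l i)⁻¹ * G j i))
        + ∑ i, ∑ j, (y i * (G i j * (l i - l j)⁻¹ * G i j)) := by
    rw [← Finset.sum_add_distrib]
    refine Finset.sum_congr rfl fun i _ => ?_
    rw [← Finset.sum_add_distrib]
    refine Finset.sum_congr rfl fun j _ => ?_
    simp only [genK, Matrix.of_apply]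
    rw [hGs.apply i j, ← neg_sub (l j) (l i), inv_neg]; ring
  rw [h2, Finset.sum_comm]
  simp_rw [Finset.mul_sum]
  rw [← Finset.sum_add_distrib]
  refine Finset.sum_congr rfl fun i _ => ?_
  rw [← Finset.sum_add_distrib]
  refine Finset.sum_congr rfl fun j _ => by ring

/-- The second-order trace identity: `tr([K,D] K Λ) = tr([K,D] G) / 2`. -/
lemma trace_half {n : ℕ} (l d : Fin n → ℝ) {G : Matrix (Fin n) (Fin n) ℝ} (hG : G.IsSymm) :
    2 * ((genK l G * Matrix.diagonal d - Matrix.diagonal d * genK l G)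
      * (genK l G * Matrix.diagonal l)).trace
      = ((genK l G * Matrix.diagonal d - Matrix.diagonal d * genK l G) * G).trace := by
  rw [trace_comm_diag, trace_comm_diag, two_mul]
  nth_rewrite 2 [Finset.sum_comm]
  rw [← Finset.sum_add_distrib]
  refine Finset.sum_congr rfl fun i _ => ?_
  rw [← Finset.sum_add_distrib]
  refine Finset.sum_congr rfl fun j _ => ?_
  simp only [Matrix.mul_diagonal, genK, Matrix.of_apply]
  rw [hG.apply i j, ← neg_sub (l j) (l i), inv_neg]
  by_cases h : l j - l i = 0
  · simp [h]
  · have : l j = l i + (l j - l i) := by ring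
    generalize l j - l i = s at *
    rw [this]
    field_simp
    ring

lemma exists_path {n : ℕ} (K : Matrix (Fin n) (Fin n) ℝ) (hK : Kᵀ = -K) :
    ∃ M : ℝ → Matrix (Fin n) (Fin n) ℝ, (∀ t, (1 + t • M t) * (1 + t • M t)ᵀ = 1) ∧
      Tendsto M (𝓝[>] 0) (𝓝 K) := by
  let : NormedRing (Matrix (Fin n) (Fin n) ℝ) := Matrix.linftyOpNormedRing
  let : NormedAlgebra ℝ (Matrix (Fin n) (Fin n) ℝ) := Matrix.linftyOpNormedAlgebra
  refine ⟨fun t => t⁻¹ • (NormedSpace.exp (t • K) - 1), ?_, ?_⟩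
  · intro t
    by_cases ht : t = 0
    · simp [ht]
    · have : 1 + t • t⁻¹ • (NormedSpace.exp (t • K) - 1) = NormedSpace.exp (t • K) := by
        rw [smul_smul, mul_inv_cancel₀ ht, one_smul]; abel
      rw [this, ← Matrix.exp_transpose, Matrix.transpose_smul, hK, smul_neg,
        ← Matrix.exp_add_of_commute]
      · simp
      · exact (Commute.refl _).neg_right
  · have h := hasDerivAt_exp_smul_const (𝕂 := ℝ) K 0
    rw [hasDerivAt_iff_tendsto_slope_zero] at h
    simp only [zero_add, zero_smul, NormedSpace.exp_zero, one_mul] at h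
    exact h.mono_left (nhdsWithin_mono _ (fun x hx => ne_of_gt hx))

/-! ## First-order analysis of the eigenvalue map -/

/-- difference quotient of the eigenvalue map -/
def wq {n : ℕ} (X : Sym n) (p : ℝ × Sym n) : Fin n → ℝ :=
  fun i => p.1⁻¹ * (eigval (X.val + p.1 • p.2.val) i - eigval X.val i)

lemma symm_pert {n : ℕ} (X H : Sym n) (t : ℝ) : (X.val + t • H.val).IsSymm :=
  (X + t • H).2

lemma eigval_pert {n : ℕ} (X : Sym n) (p : ℝ × Sym n) (hp : p.1 ≠ 0) (i : Fin n) :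
    eigval (X.val + p.1 • p.2.val) i = eigval X.val i + p.1 * wq X p i := by
  unfold wq
  rw [← mul_assoc, mul_inv_cancel₀ hp]; ring

lemma wq_key {n : ℕ} (X : Sym n) (p : ℝ × Sym n) (hp : 0 < p.1) :
    2 * ∑ i, eigval X.val i * wq X p i + p.1 * ∑ i, wq X p i * wq X p i
      = 2 * (X.val * p.2.val).trace + p.1 * (p.2.val * p.2.val).trace := by
  have h1 := trace_sq_eigval (symm_pert X p.2 p.1)
  have h2 := trace_sq_eigval (Z := X.val) X.2
  have h3 : ∑ i, eigval (X.val + p.1 • p.2.val) i * eigval (X.val + p.1 • p.2.val) i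
      = ∑ i, eigval X.val i * eigval X.val i + p.1 * (2 * ∑ i, eigval X.val i * wq X p i
        + p.1 * ∑ i, wq X p i * wq X p i) := by
    simp only [Finset.mul_sum, ← Finset.sum_add_distrib]
    refine Finset.sum_congr rfl fun i _ => ?_
    rw [eigval_pert X p hp.ne']; ring
  have h4 : ((X.val + p.1 • p.2.val) * (X.val + p.1 • p.2.val)).trace
      = (X.val * X.val).trace + p.1 * (2 * (X.val * p.2.val).trace
        + p.1 * (p.2.val * p.2.val).trace) := by
    simp only [Matrix.add_mul, Matrix.mul_add, Matrix.trace_add, Matrix.smul_mul, Matrix.mul_smul,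
      Matrix.trace_smul, smul_eq_mul]
    rw [Matrix.trace_mul_comm p.2.val X.val]; ring
  have h5 : p.1 * (2 * ∑ i, eigval X.val i * wq X p i + p.1 * ∑ i, wq X p i * wq X p i)
      = p.1 * (2 * (X.val * p.2.val).trace + p.1 * (p.2.val * p.2.val).trace) := by linarith
  exact mul_left_cancel₀ hp.ne' h5

lemma wq_bound {n : ℕ} (X : Sym n) (p : ℝ × Sym n) (hp : 0 < p.1) :
    ∑ i, wq X p i * wq X p i ≤ (p.2.val * p.2.val).trace := by
  have h1 := wq_key X p hp
  obtain ⟨R, hR, hRe⟩ := exists_eigOrth (X := X.val) X.2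
  have h2 := fan_perm (symm_pert X p.2 p.1) hR (eigval X.val) (Equiv.refl _)
    (eigval_antitone X.val)
  rw [← hRe] at h2
  have h3 := trace_sq_eigval (Z := X.val) X.2
  have h4 : ∑ i, eigval X.val ((Equiv.refl (Fin n)) i) * eigval (X.val + p.1 • p.2.val) i
      = ∑ i, eigval X.val i * eigval X.val i + p.1 * ∑ i, eigval X.val i * wq X p i := by
    simp only [Finset.mul_sum, ← Finset.sum_add_distrib]
    refine Finset.sum_congr rfl fun i _ => ?_
    rw [eigval_pert X p hp.ne', Equiv.refl_apply]; ring
  rw [h4, Matrix.mul_add, Matrix.trace_add, Matrix.mul_smul, Matrix.trace_smul, smul_eq_mul] at h2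
  have h5 : (X.val * p.2.val).trace ≤ ∑ i, eigval X.val i * wq X p i := by
    have : p.1 * (X.val * p.2.val).trace ≤ p.1 * ∑ i, eigval X.val i * wq X p i := by linarith
    exact le_of_mul_le_mul_left this hp
  have h6 : p.1 * ∑ i, wq X p i * wq X p i ≤ p.1 * (p.2.val * p.2.val).trace := by linarith
  exact le_of_mul_le_mul_left h6 hp

lemma tendsto_fst_F {n : ℕ} (H : Sym n) :
    Tendsto (fun p : ℝ × Sym n => p.1) ((𝓝[>] (0 : ℝ)) ×ˢ 𝓝 H) (𝓝[>] 0) := tendsto_fst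

lemma tendsto_snd_F {n : ℕ} (H : Sym n) :
    Tendsto (fun p : ℝ × Sym n => p.2.val) ((𝓝[>] (0 : ℝ)) ×ˢ 𝓝 H) (𝓝 H.val) :=
  (continuous_subtype_val.tendsto H).comp tendsto_snd

lemma pos_F {n : ℕ} (H : Sym n) :
    ∀ᶠ p : ℝ × Sym n in (𝓝[>] (0 : ℝ)) ×ˢ 𝓝 H, 0 < p.1 :=
  (tendsto_fst_F H).eventually (eventually_mem_nhdsWithin)

lemma tendsto_trace {α : Type*} {n : ℕ} {l : Filter α} {f : α → Matrix (Fin n) (Fin n) ℝ}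
    {A : Matrix (Fin n) (Fin n) ℝ} (h : Tendsto f l (𝓝 A)) :
    Tendsto (fun p => (f p).trace) l (𝓝 A.trace) :=
  (Continuous.matrix_trace continuous_id |>.tendsto A).comp h

lemma tendsto_mul_mat {α : Type*} {n : ℕ} {l : Filter α} {f g : α → Matrix (Fin n) (Fin n) ℝ}
    {A B : Matrix (Fin n) (Fin n) ℝ} (h : Tendsto f l (𝓝 A)) (h' : Tendsto g l (𝓝 B)) :
    Tendsto (fun p => f p * g p) l (𝓝 (A * B)) :=
  h.mul h'

lemma tendsto_transpose {α : Type*} {n : ℕ} {l : Filter α} {f : α → Matrix (Fin n) (Fin n) ℝ}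
    {A : Matrix (Fin n) (Fin n) ℝ} (h : Tendsto f l (𝓝 A)) :
    Tendsto (fun p => (f p)ᵀ) l (𝓝 Aᵀ) :=
  (Continuous.matrix_transpose continuous_id |>.tendsto A).comp h

lemma tendsto_entry {α : Type*} {n : ℕ} {l : Filter α} {f : α → Matrix (Fin n) (Fin n) ℝ}
    {A : Matrix (Fin n) (Fin n) ℝ} (h : Tendsto f l (𝓝 A)) (i j : Fin n) :
    Tendsto (fun p => f p i j) l (𝓝 (A i j)) :=
  tendsto_pi_nhds.mp (tendsto_pi_nhds.mp h i) j

lemma wq_eventually_bdd {n : ℕ} (X H : Sym n) :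
    ∀ᶠ p : ℝ × Sym n in (𝓝[>] (0 : ℝ)) ×ˢ 𝓝 H,
      ∑ i, wq X p i * wq X p i ≤ (H.val * H.val).trace + 1 := by
  have h1 := tendsto_trace (tendsto_mul_mat (tendsto_snd_F H) (tendsto_snd_F H))
  filter_upwards [pos_F H, h1.eventually (gt_mem_nhds (lt_add_one _))] with p hp hp'
  exact (wq_bound X p hp).trans hp'.le

lemma wq_ultra {n : ℕ} (X H : Sym n) {U : Matrix (Fin n) (Fin n) ℝ} (hU : U ∈ eigOrth X.val)
    (F : Ultrafilter (ℝ × Sym n)) (hF : (F : Filter (ℝ × Sym n)) ≤ (𝓝[>] (0 : ℝ)) ×ˢ 𝓝 H) :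
    ∃ (Q : Matrix (Fin n) (Fin n) ℝ) (w : Fin n → ℝ), Q * Qᵀ = 1 ∧
      (∀ i j, eigval X.val i ≠ eigval X.val j → Q i j = 0) ∧
      (∀ i j, eigval X.val i = eigval X.val j →
        ((Uᵀ * H.val * U) * Q) i j = Q i j * w j) ∧
      (∀ i j, i ≤ j → eigval X.val i = eigval X.val j → w j ≤ w i) ∧
      Tendsto (wq X) F (𝓝 w) := by
  obtain ⟨hUo, hX⟩ := hU
  set l := eigval X.val with hl
  choose R hR hRe using fun p : ℝ × Sym n => exists_eigOrth (symm_pert X p.2 p.1)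
  set Qp : ℝ × Sym n → Matrix (Fin n) (Fin n) ℝ := fun p => Uᵀ * R p with hQp
  have hQo : ∀ p, Qp p * (Qp p)ᵀ = 1 := fun p => orth_mul (hR p) (orth_transpose hUo)
  have hpos : ∀ᶠ p in (F : Filter (ℝ × Sym n)), 0 < p.1 := hF (pos_F H)
  -- compactness for `Q`
  obtain ⟨Q, hQlim⟩ : ∃ Q, Tendsto Qp F (𝓝 Q) := by
    have hc : IsCompact (Set.pi Set.univ
        (fun _ : Fin n => Set.pi Set.univ (fun _ : Fin n => Set.Icc (-1 : ℝ) 1))) :=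
      isCompact_univ_pi fun _ => isCompact_univ_pi fun _ => isCompact_Icc
    have hmem : ∀ p, Qp p ∈ (Set.pi Set.univ
        (fun _ : Fin n => Set.pi Set.univ (fun _ : Fin n => Set.Icc (-1 : ℝ) 1))) := by
      intro p i _ j _
      have := congrFun (congrFun (hQo p) i) i
      rw [Matrix.mul_apply, Matrix.one_apply_eq] at this
      simp only [Matrix.transpose_apply] at this
      have h2 : Qp p i j * Qp p i j ≤ ∑ k, Qp p i k * Qp p i k :=
        Finset.single_le_sum (f := fun k => Qp p i k * Qp p i k)
          (fun k _ => mul_self_nonneg _) (Finset.mem_univ j)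
      constructor <;> nlinarith
    let Qf : ℝ × Sym n → (Fin n → Fin n → ℝ) := Qp
    obtain ⟨Q, _, hQ⟩ := hc.ultrafilter_le_nhds (F.map Qf)
      (by
        rw [Filter.le_principal_iff, Ultrafilter.coe_map, Filter.mem_map]
        exact Filter.Eventually.of_forall hmem)
    exact ⟨Q, hQ⟩
  obtain ⟨w, hwlim⟩ : ∃ w, Tendsto (wq X) F (𝓝 w) := by
    set r := (H.val * H.val).trace + 1 with hr
    have hc : IsCompact (Set.pi Set.univ (fun _ : Fin n => Set.Icc (-(r + 1)) (r + 1))) :=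
      isCompact_univ_pi fun _ => isCompact_Icc
    obtain ⟨w, _, hw⟩ := hc.ultrafilter_le_nhds (F.map (wq X))
      (by
        rw [Filter.le_principal_iff, Ultrafilter.coe_map, Filter.mem_map]
        have := hF (wq_eventually_bdd X H)
        refine Filter.mem_of_superset this ?_
        intro p hp i _
        have hp' : ∑ i, wq X p i * wq X p i ≤ r := hp
        have h2 : wq X p i * wq X p i ≤ ∑ k, wq X p k * wq X p k :=
          Finset.single_le_sum (f := fun k => wq X p k * wq X p k)
            (fun k _ => mul_self_nonneg _) (Finset.mem_univ i)
        constructor <;> nlinarith)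
    exact ⟨w, hw⟩
  have htlim : Tendsto (fun p : ℝ × Sym n => p.1) F (𝓝 0) :=
    ((tendsto_fst_F H).mono_left hF).mono_right nhdsWithin_le_nhds
  have hHlim : Tendsto (fun p : ℝ × Sym n => p.2.val) F (𝓝 H.val) :=
    (tendsto_snd_F H).mono_left hF
  have hGlim : Tendsto (fun p : ℝ × Sym n => (Uᵀ * p.2.val * U) * Qp p) F
      (𝓝 ((Uᵀ * H.val * U) * Q)) :=
    tendsto_mul_mat (tendsto_mul_mat (tendsto_mul_mat tendsto_const_nhds hHlim)
      tendsto_const_nhds) hQlim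
  have hwi : ∀ i, Tendsto (fun p => wq X p i) F (𝓝 (w i)) := tendsto_pi_nhds.mp hwlim
  -- entrywise equation
  have hent : ∀ p : ℝ × Sym n, 0 < p.1 → ∀ i j,
      l i * Qp p i j + p.1 * ((Uᵀ * p.2.val * U) * Qp p) i j
        = Qp p i j * (l j + p.1 * wq X p j) := by
    intro p hp i j
    have e1 : (X.val + p.1 • p.2.val) * R p
        = R p * Matrix.diagonal (eigval (X.val + p.1 • p.2.val)) := by
      nth_rewrite 1 [hRe p]
      rw [Matrix.mul_assoc, orth_comm (hR p), Matrix.mul_one]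
    have e2 : Matrix.diagonal l * Qp p + p.1 • ((Uᵀ * p.2.val * U) * Qp p)
        = Qp p * Matrix.diagonal (eigval (X.val + p.1 • p.2.val)) := by
      have hUU := orth_comm hUo
      have e3 : Matrix.diagonal l * Qp p = Uᵀ * X.val * R p := by
        rw [hX, hQp]
        calc _ = Matrix.diagonal l * Uᵀ * R p := by rw [Matrix.mul_assoc]
          _ = (Uᵀ * U) * Matrix.diagonal l * Uᵀ * R p := by rw [hUU, Matrix.one_mul]
          _ = _ := by simp only [Matrix.mul_assoc]
      have e4 : (Uᵀ * p.2.val * U) * Qp p = Uᵀ * p.2.val * R p := by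
        rw [hQp]
        calc _ = Uᵀ * p.2.val * (U * Uᵀ) * R p := by simp only [Matrix.mul_assoc]
          _ = _ := by rw [hUo, Matrix.mul_one]
      rw [e3, e4, hQp]
      simp only
      rw [Matrix.mul_assoc Uᵀ (R p), ← e1, Matrix.add_mul, Matrix.mul_add]
      simp only [Matrix.mul_assoc, Matrix.smul_mul, Matrix.mul_smul]
    have e5 := congrFun (congrFun e2 i) j
    rw [Matrix.add_apply, Matrix.smul_apply, Matrix.diagonal_mul, Matrix.mul_diagonal,
      eigval_pert X p hp.ne', smul_eq_mul] at e5
    exact e5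
  refine ⟨Q, w, ?_, ?_, ?_, ?_, hwlim⟩
  · have h1 := tendsto_mul_mat hQlim (tendsto_transpose hQlim)
    have h2 : Tendsto (fun p => Qp p * (Qp p)ᵀ) F (𝓝 1) := by
      simp_rw [hQo]; exact tendsto_const_nhds
    exact tendsto_nhds_unique h1 h2
  · intro i j hij
    have h1 : Tendsto (fun p => l i * Qp p i j + p.1 * ((Uᵀ * p.2.val * U) * Qp p) i j) F
        (𝓝 (l i * Q i j + 0 * ((Uᵀ * H.val * U) * Q) i j)) :=
      ((tendsto_entry hQlim i j).const_mul _).add (htlim.mul (tendsto_entry hGlim i j))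
    have h2 : Tendsto (fun p => Qp p i j * (l j + p.1 * wq X p j)) F
        (𝓝 (Q i j * (l j + 0 * w j))) :=
      (tendsto_entry hQlim i j).mul (tendsto_const_nhds.add (htlim.mul (hwi j)))
    have h3 := tendsto_nhds_unique (h1.congr' (hpos.mono fun p hp => hent p hp i j)) h2
    have h4 : (l i - l j) * Q i j = 0 := by linarith
    exact (mul_eq_zero.mp h4).resolve_left (sub_ne_zero.mpr hij)
  · intro i j hij
    have h2 : Tendsto (fun p => Qp p i j * wq X p j) F (𝓝 (Q i j * w j)) :=
      (tendsto_entry hQlim i j).mul (hwi j)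
    refine tendsto_nhds_unique ((tendsto_entry hGlim i j).congr' ?_) h2
    filter_upwards [hpos] with p hp
    have := hent p hp i j
    rw [hij] at this
    have h3 : p.1 * ((Uᵀ * p.2.val * U) * Qp p) i j = p.1 * (Qp p i j * wq X p j) := by linarith
    exact mul_left_cancel₀ hp.ne' h3
  · intro i j hij hl'
    refine le_of_tendsto_of_tendsto (hwi j) (hwi i) ?_
    filter_upwards [hpos] with p hp
    have h1 := eigval_antitone (X.val + p.1 • p.2.val) hij
    rw [eigval_pert X p hp.ne', eigval_pert X p hp.ne'] at h1
    have h2 : p.1 * wq X p j ≤ p.1 * wq X p i := by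
      change l j + _ ≤ l i + _ at h1
      linarith
    exact le_of_mul_le_mul_left h2 hp

lemma wq_tendsto {n : ℕ} (X H : Sym n) {U : Matrix (Fin n) (Fin n) ℝ} (hU : U ∈ eigOrth X.val) :
    Tendsto (wq X) ((𝓝[>] (0 : ℝ)) ×ˢ 𝓝 H) (𝓝 (lambdaDir X.val U H.val)) := by
  rw [tendsto_iff_ultrafilter]
  intro F hF
  obtain ⟨Q, w, h1, h2, h3, h4, h5⟩ := wq_ultra X H hU F hF
  have : lambdaDir X.val U H.val = w := funext fun i =>
    lambdaDir_unique X.val _ Q w h1 h2 h3 h4 i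
  rw [this]; exact h5

lemma lambdaDir_spec {n : ℕ} (X H : Sym n) {U : Matrix (Fin n) (Fin n) ℝ}
    (hU : U ∈ eigOrth X.val) :
    ∃ Q : Matrix (Fin n) (Fin n) ℝ, Q * Qᵀ = 1 ∧
      (∀ i j, eigval X.val i ≠ eigval X.val j → Q i j = 0) ∧
      (∀ i j, eigval X.val i = eigval X.val j →
        ((Uᵀ * H.val * U) * Q) i j = Q i j * lambdaDir X.val U H.val j) ∧
      (∀ i j, i ≤ j → eigval X.val i = eigval X.val j →
        lambdaDir X.val U H.val j ≤ lambdaDir X.val U H.val i) := by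
  obtain ⟨Q, w, h1, h2, h3, h4, h5⟩ := wq_ultra X H hU
    (Ultrafilter.of ((𝓝[>] (0 : ℝ)) ×ˢ 𝓝 H)) (Ultrafilter.of_le _)
  have : lambdaDir X.val U H.val = w := funext fun i =>
    lambdaDir_unique X.val _ Q w h1 h2 h3 h4 i
  rw [this]; exact ⟨Q, h1, h2, h3, h4⟩

/-! ## Second-order analysis -/

/-- commutator with a diagonal matrix -/
def cm {n : ℕ} (M : Matrix (Fin n) (Fin n) ℝ) (d : Fin n → ℝ) : Matrix (Fin n) (Fin n) ℝ :=
  M * Matrix.diagonal d - Matrix.diagonal d * M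

lemma trace_cm {n : ℕ} (K M : Matrix (Fin n) (Fin n) ℝ) (d : Fin n → ℝ) :
    (cm K d * M).trace = ∑ i, ∑ j, K i j * (d j - d i) * M j i := trace_comm_diag K M d

lemma trace_cm_diag {n : ℕ} (K : Matrix (Fin n) (Fin n) ℝ) (d l : Fin n → ℝ) :
    (cm K d * Matrix.diagonal l).trace = 0 := by
  rw [trace_cm]
  refine Finset.sum_eq_zero fun i _ => Finset.sum_eq_zero fun j _ => ?_
  by_cases h : j = i
  · subst h; simp
  · simp [h]

lemma conj_sub {n : ℕ} {M : Matrix (Fin n) (Fin n) ℝ} {t : ℝ}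
    (hC : (1 + t • M) * (1 + t • M)ᵀ = 1) (d : Fin n → ℝ) :
    (1 + t • M) * Matrix.diagonal d * (1 + t • M)ᵀ
      = Matrix.diagonal d + t • (cm M d * (1 + t • M)ᵀ) := by
  have h1 : (1 + t • M) * Matrix.diagonal d = Matrix.diagonal d * (1 + t • M) + t • cm M d := by
    rw [cm, Matrix.add_mul, Matrix.mul_add, smul_sub, Matrix.one_mul, Matrix.mul_one,
      Matrix.smul_mul, Matrix.mul_smul]
    abel
  rw [h1, Matrix.add_mul, Matrix.mul_assoc, hC, Matrix.mul_one, Matrix.smul_mul]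

lemma path_expand {n : ℕ} {M : Matrix (Fin n) (Fin n) ℝ} {t : ℝ}
    (hC : (1 + t • M) * (1 + t • M)ᵀ = 1) (d l : Fin n → ℝ) (G : Matrix (Fin n) (Fin n) ℝ) :
    ((1 + t • M) * Matrix.diagonal d * (1 + t • M)ᵀ * (Matrix.diagonal l + t • G)).trace
      = ∑ i, d i * l i + t * (Matrix.diagonal d * G).trace
        + t ^ 2 * ((cm M d * (Mᵀ * Matrix.diagonal l)).trace
          + (cm M d * ((1 + t • M)ᵀ * G)).trace) := by
  rw [conj_sub hC]
  have h1 : (cm M d * (1 + t • M)ᵀ * Matrix.diagonal l).trace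
      = t * (cm M d * (Mᵀ * Matrix.diagonal l)).trace := by
    rw [Matrix.transpose_add, Matrix.transpose_one, Matrix.transpose_smul, Matrix.mul_add,
      Matrix.mul_one, Matrix.add_mul, Matrix.trace_add, trace_cm_diag, zero_add, Matrix.mul_smul,
      Matrix.smul_mul, Matrix.trace_smul, smul_eq_mul, Matrix.mul_assoc]
  have h2 : (Matrix.diagonal d * Matrix.diagonal l).trace = ∑ i, d i * l i := by
    rw [Matrix.diagonal_mul_diagonal, Matrix.trace_diagonal]
  rw [Matrix.add_mul, Matrix.mul_add, Matrix.mul_add, Matrix.trace_add, Matrix.trace_add,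
    Matrix.trace_add, h2, Matrix.smul_mul, Matrix.trace_smul, h1]
  simp only [Matrix.smul_mul, Matrix.mul_smul, Matrix.trace_smul, smul_eq_mul, Matrix.mul_assoc]
  ring

open scoped Classical in
/-- block-diagonal part -/
def blkd {n : ℕ} (l : Fin n → ℝ) (G : Matrix (Fin n) (Fin n) ℝ) : Matrix (Fin n) (Fin n) ℝ :=
  Matrix.of fun i j => if l i = l j then G i j else 0

lemma cm_genK_add_blkd {n : ℕ} (l : Fin n → ℝ) (G : Matrix (Fin n) (Fin n) ℝ) :
    cm (genK l G) l + blkd l G = G := by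
  ext i j
  rw [Matrix.add_apply, cm, Matrix.sub_apply, Matrix.mul_diagonal, Matrix.diagonal_mul]
  simp only [genK, blkd, Matrix.of_apply]
  by_cases h : l i = l j
  · simp [h]
  · have : l j - l i ≠ 0 := fun h' => h (by linarith)
    simp only [h, if_false]
    field_simp
    ring

lemma trace_cm_blkd {n : ℕ} (l d : Fin n → ℝ) (G : Matrix (Fin n) (Fin n) ℝ) :
    (cm (genK l G) d * blkd l G).trace = 0 := by
  rw [trace_cm]
  refine Finset.sum_eq_zero fun i _ => Finset.sum_eq_zero fun j _ => ?_
  simp only [genK, blkd, Matrix.of_apply]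
  by_cases h : l j = l i
  · simp [h]
  · simp [h]

lemma blkd_conj {n : ℕ} {l w : Fin n → ℝ} {G Q : Matrix (Fin n) (Fin n) ℝ}
    (hQ : Q * Qᵀ = 1) (hQb : ∀ i j, l i ≠ l j → Q i j = 0)
    (hGQ : ∀ i j, l i = l j → (G * Q) i j = Q i j * w j) :
    blkd l G = Q * Matrix.diagonal w * Qᵀ := by
  have h : blkd l G * Q = Q * Matrix.diagonal w := by
    ext i j
    rw [Matrix.mul_diagonal]
    by_cases hij : l i = l j
    · rw [← hGQ i j hij, Matrix.mul_apply, Matrix.mul_apply]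
      refine Finset.sum_congr rfl fun k _ => ?_
      simp only [blkd, Matrix.of_apply]
      by_cases hk : l i = l k
      · simp [hk]
      · rw [hQb k j (by rw [← hij]; exact fun h => hk h.symm)]; simp
    · rw [hQb i j hij, zero_mul, Matrix.mul_apply]
      refine Finset.sum_eq_zero fun k _ => ?_
      simp only [blkd, Matrix.of_apply]
      by_cases hk : l i = l k
      · rw [hQb k j (by rw [← hk]; exact hij)]; simp
      · simp [hk]
  rw [← h, Matrix.mul_assoc, hQ, Matrix.mul_one]

lemma diag_comm_of_block {n : ℕ} {l : Fin n → ℝ} {Q : Matrix (Fin n) (Fin n) ℝ}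
    (hQ : Q * Qᵀ = 1) (hQb : ∀ i j, l i ≠ l j → Q i j = 0) :
    Matrix.diagonal l = Q * Matrix.diagonal l * Qᵀ := by
  have h : Q * Matrix.diagonal l = Matrix.diagonal l * Q := by
    ext i j
    rw [Matrix.mul_diagonal, Matrix.diagonal_mul]
    by_cases hij : l i = l j
    · rw [hij, mul_comm]
    · rw [hQb i j hij]; ring
  rw [h, Matrix.mul_assoc, hQ, Matrix.mul_one]

lemma tendsto_cm {α : Type*} {n : ℕ} {F : Filter α} {f : α → Matrix (Fin n) (Fin n) ℝ}
    {A : Matrix (Fin n) (Fin n) ℝ} (h : Tendsto f F (𝓝 A)) (d : Fin n → ℝ) :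
    Tendsto (fun p => cm (f p) d) F (𝓝 (cm A d)) :=
  (tendsto_mul_mat h tendsto_const_nhds).sub (tendsto_mul_mat tendsto_const_nhds h)

lemma tendsto_C {α : Type*} {n : ℕ} {F : Filter α} {f : α → Matrix (Fin n) (Fin n) ℝ}
    {A : Matrix (Fin n) (Fin n) ℝ} (h : Tendsto f F (𝓝 A)) {t : α → ℝ}
    (ht : Tendsto t F (𝓝 0)) :
    Tendsto (fun p => 1 + t p • f p) F (𝓝 1) := by
  have := (tendsto_const_nhds (x := (1 : Matrix (Fin n) (Fin n) ℝ)) (f := F)).add (ht.smul h)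
  simpa using this

lemma exists_c_sorted {n : ℕ} {l v : Fin n → ℝ} (hl : Antitone l)
    (hv : ∀ i j, i ≤ j → l i = l j → v j ≤ v i) :
    ∀ᶠ c : ℝ in atTop, Antitone (fun i => v i + c * l i) := by
  have : ∀ i j : Fin n, ∀ᶠ c : ℝ in atTop, i ≤ j → v j + c * l j ≤ v i + c * l i := by
    intro i j
    by_cases h : l i = l j
    · refine Eventually.of_forall fun c hij => ?_
      have := hv i j hij h
      rw [h]; linarith
    · filter_upwards [eventually_ge_atTop ((v j - v i) / (l i - l j))] with c hc hij
      have h1 : 0 < l i - l j := by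
        have := hl hij
        exact sub_pos.mpr (lt_of_le_of_ne this (Ne.symm h))
      rw [div_le_iff₀ h1] at hc
      linarith
  filter_upwards [eventually_all.mpr fun i => eventually_all.mpr (this i)] with c hc i j hij
  exact hc i j hij

lemma exists_c_sep {n : ℕ} (l y : Fin n → ℝ) :
    ∀ᶠ c : ℝ in atTop, ∀ i j, l i ≠ l j → y i + c * l i ≠ y j + c * l j := by
  refine eventually_all.mpr fun i => eventually_all.mpr fun j => ?_
  filter_upwards [eventually_gt_atTop ((y j - y i) / (l i - l j))] with c hc hij h
  apply hc.ne
  rw [div_eq_iff (sub_ne_zero.mpr hij)]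
  linarith

lemma trace_conj_right {n : ℕ} {U : Matrix (Fin n) (Fin n) ℝ} (D Z : Matrix (Fin n) (Fin n) ℝ) :
    ((U * D * Uᵀ) * Z).trace = (D * (Uᵀ * Z * U)).trace := by
  rw [Matrix.mul_assoc, Matrix.mul_assoc, Matrix.trace_mul_comm]
  simp only [Matrix.mul_assoc]

lemma lower_second {n : ℕ} (X Y H : Sym n) {U : Matrix (Fin n) (Fin n) ℝ} (y v : Fin n → ℝ)
    (σ : Equiv.Perm (Fin n)) (hU : U ∈ eigOrth X.val)
    (hYdec : Y.val = U * Matrix.diagonal y * Uᵀ)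
    (hσblock : ∀ i, eigval X.val (σ i) = eigval X.val i)
    (hv : ∀ i, v i = y (σ i))
    (hvdec : ∀ i j : Fin n, i ≤ j → eigval X.val i = eigval X.val j → v j ≤ v i) :
    ∃ b : ℝ × Sym n → ℝ, Tendsto b ((𝓝[>] (0 : ℝ)) ×ˢ 𝓝 H) (𝓝 (curvTerm X.val U H.val y)) ∧
      ∀ᶠ p in (𝓝[>] (0 : ℝ)) ×ˢ 𝓝 H,
        b p ≤ 2 / p.1 * (ipV v (wq X p) - ipM Y p.2) := by
  have hU' := hU
  obtain ⟨hUo, hX⟩ := hU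
  set l := eigval X.val with hl
  set G := Uᵀ * H.val * U with hG
  have hGs : G.IsSymm := by
    rw [Matrix.IsSymm, hG]
    have : (H.val)ᵀ = H.val := H.2
    simp [Matrix.transpose_mul, Matrix.mul_assoc, this]
  obtain ⟨c, hc⟩ := (exists_c_sorted (eigval_antitone X.val) hvdec).exists
  obtain ⟨M, hMo, hMlim⟩ := exists_path (genK l G) (genK_skew l hGs)
  set d : Fin n → ℝ := fun i => y i + c * l i with hd
  set w := lambdaDir X.val U H.val with hw
  have hMF : Tendsto (fun p : ℝ × Sym n => M p.1) ((𝓝[>] (0 : ℝ)) ×ˢ 𝓝 H) (𝓝 (genK l G)) :=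
    hMlim.comp (tendsto_fst_F H)
  have htF : Tendsto (fun p : ℝ × Sym n => p.1) ((𝓝[>] (0 : ℝ)) ×ˢ 𝓝 H) (𝓝 0) :=
    (tendsto_fst_F H).mono_right nhdsWithin_le_nhds
  have hGF : Tendsto (fun p : ℝ × Sym n => Uᵀ * p.2.val * U) ((𝓝[>] (0 : ℝ)) ×ˢ 𝓝 H) (𝓝 G) :=
    tendsto_mul_mat (tendsto_mul_mat tendsto_const_nhds (tendsto_snd_F H)) tendsto_const_nhds
  have hCF := tendsto_C hMF htF
  have hwF := wq_tendsto X H hU'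
  refine ⟨fun p => 2 * ((cm (M p.1) d * ((M p.1)ᵀ * Matrix.diagonal l)).trace
      + (cm (M p.1) d * ((1 + p.1 • M p.1)ᵀ * (Uᵀ * p.2.val * U))).trace)
      - c * ((p.2.val * p.2.val).trace - ∑ i, wq X p i * wq X p i), ?_, ?_⟩
  · -- limit
    have hlim : curvTerm X.val U H.val y = 2 * ((cm (genK l G) d * ((genK l G)ᵀ
        * Matrix.diagonal l)).trace + (cm (genK l G) d * ((1 : Matrix (Fin n) (Fin n) ℝ)ᵀ * G)).trace)
        - c * ((H.val * H.val).trace - ∑ i, w i * w i) := by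
      have e1 := trace_half l d hGs
      have e2 : (cm (genK l G) d * ((genK l G)ᵀ * Matrix.diagonal l)).trace
          = - (cm (genK l G) d * (genK l G * Matrix.diagonal l)).trace := by
        rw [genK_skew l hGs, Matrix.neg_mul, Matrix.mul_neg, Matrix.trace_neg]
      have e3 : (cm (genK l G) d * G).trace = (cm (genK l G) y * G).trace
          + c * (cm (genK l G) l * G).trace := by
        simp only [trace_cm, Finset.mul_sum, ← Finset.sum_add_distrib]
        refine Finset.sum_congr rfl fun i _ => Finset.sum_congr rfl fun j _ => ?_
        simp only [hd]; ring
      have e4 : curvTerm X.val U H.val y = (cm (genK l G) y * G).trace :=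
        curvTerm_eq y hU' H.2
      obtain ⟨Q, hQ, hQb, hGQ, _⟩ := lambdaDir_spec X H hU'
      have e5 : blkd l G = Q * Matrix.diagonal w * Qᵀ := blkd_conj hQ hQb hGQ
      have e6 : (blkd l G * blkd l G).trace = ∑ i, w i * w i := by
        rw [e5]; exact trace_sq_conj hQ w w
      have e7 : (H.val * H.val).trace = (G * G).trace := by
        have : G * G = Uᵀ * (H.val * H.val * U) := by
          rw [hG]
          calc _ = Uᵀ * H.val * (U * Uᵀ) * H.val * U := by simp only [Matrix.mul_assoc]
            _ = _ := by rw [hUo, Matrix.mul_one]; simp only [Matrix.mul_assoc]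
        rw [this, Matrix.trace_mul_comm Uᵀ, Matrix.mul_assoc (H.val*H.val), hUo, Matrix.mul_one]
      have e8 : (G * G).trace = (cm (genK l G) l * G).trace + (blkd l G * blkd l G).trace := by
        have h1 : (G * G).trace = (cm (genK l G) l * G).trace + (blkd l G * G).trace := by
          rw [← Matrix.trace_add, ← Matrix.add_mul, cm_genK_add_blkd]
        have h2 : (blkd l G * G).trace = (blkd l G * cm (genK l G) l).trace
            + (blkd l G * blkd l G).trace := by
          rw [← Matrix.trace_add, ← Matrix.mul_add, cm_genK_add_blkd]
        rw [Matrix.trace_mul_comm (blkd l G) (cm _ _), trace_cm_blkd] at h2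
        linarith
      change 2 * (cm (genK l G) d * (genK l G * Matrix.diagonal l)).trace
        = (cm (genK l G) d * G).trace at e1
      rw [Matrix.transpose_one, Matrix.one_mul, e2, e4, e7, e8, ← e6]
      linarith
    rw [hlim]
    refine Tendsto.sub (Tendsto.const_mul _ (Tendsto.add ?_ ?_))
      (Tendsto.const_mul _ (Tendsto.sub ?_ ?_))
    · exact tendsto_trace (tendsto_mul_mat (tendsto_cm hMF d)
        (tendsto_mul_mat (tendsto_transpose hMF) tendsto_const_nhds))
    · exact tendsto_trace (tendsto_mul_mat (tendsto_cm hMF d)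
        (tendsto_mul_mat (tendsto_transpose hCF) hGF))
    · exact tendsto_trace (tendsto_mul_mat (tendsto_snd_F H) (tendsto_snd_F H))
    · exact tendsto_finsetSum _ fun i _ =>
        (tendsto_pi_nhds.mp hwF i).mul (tendsto_pi_nhds.mp hwF i)
  · filter_upwards [pos_F H] with p hp
    obtain ⟨t, H'⟩ := p
    simp only at hp ⊢
    set C := 1 + t • M t with hC
    have hCo : C * Cᵀ = 1 := hMo t
    have hVo := orth_mul hCo hUo
    have hdσ : ∀ i, d (σ i) = v i + c * l i := by
      intro i; simp only [hd]; rw [hv i, hσblock]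
    have f1 := fan_perm (symm_pert X H' t) hVo d σ (by simpa only [hdσ] using hc)
    set E := (cm (M t) d * ((M t)ᵀ * Matrix.diagonal l)).trace
      + (cm (M t) d * (Cᵀ * (Uᵀ * H'.val * U))).trace with hE
    have f2 : ((U * C) * Matrix.diagonal d * (U * C)ᵀ * (X.val + t • H'.val)).trace
        = ∑ i, d i * l i + t * (Matrix.diagonal d * (Uᵀ * H'.val * U)).trace + t ^ 2 * E := by
      rw [← path_expand (hMo t)]
      have g1 : (U * C) * Matrix.diagonal d * (U * C)ᵀ = U * (C * Matrix.diagonal d * Cᵀ) * Uᵀ := by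
        rw [Matrix.transpose_mul]; simp only [Matrix.mul_assoc]
      have g2 : Uᵀ * (X.val + t • H'.val) * U = Matrix.diagonal l + t • (Uᵀ * H'.val * U) := by
        rw [Matrix.mul_add, Matrix.add_mul, Matrix.mul_smul, Matrix.smul_mul]
        congr 1
        rw [hX]
        calc _ = (Uᵀ * U) * Matrix.diagonal l * (Uᵀ * U) := by simp only [Matrix.mul_assoc]
          _ = _ := by rw [orth_comm hUo, Matrix.one_mul, Matrix.mul_one]
      rw [g1, trace_conj_right, g2]
    have f3 : (Matrix.diagonal d * (Uᵀ * H'.val * U)).trace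
        = ipM Y H' + c * (X.val * H'.val).trace := by
      have g0 : Matrix.diagonal d = Matrix.diagonal y + c • Matrix.diagonal l := by
        rw [← Matrix.diagonal_smul, Matrix.diagonal_add]; rfl
      rw [ipM, hYdec]
      nth_rewrite 1 [hX]
      rw [trace_conj_right, trace_conj_right, g0, Matrix.add_mul, Matrix.trace_add,
        Matrix.smul_mul, Matrix.trace_smul, smul_eq_mul]
    have f4 : ∑ i, d i * l i = ∑ i, v i * l i + c * ∑ i, l i * l i := by
      rw [← Equiv.sum_comp σ, Finset.mul_sum, ← Finset.sum_add_distrib]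
      refine Finset.sum_congr rfl fun i _ => ?_
      rw [hdσ]; rw [hσblock]; ring
    have f5 : ∑ i, d (σ i) * eigval (X.val + t • H'.val) i
        = ∑ i, v i * l i + c * ∑ i, l i * l i + t * ipV v (wq X (t, H'))
          + c * (t * ∑ i, l i * wq X (t, H') i) := by
      simp only [ipV, Finset.mul_sum, ← Finset.sum_add_distrib]
      refine Finset.sum_congr rfl fun i _ => ?_
      have := eigval_pert X (t, H') hp.ne' i
      simp only at this
      rw [hdσ, this]; ring
    have f6 := wq_key X (t, H') hp
    simp only at f6
    rw [f2, f5, f4, f3] at f1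
    set a := ipV v (wq X (t, H'))
    set q := ipM Y H'
    set s1 := (X.val * H'.val).trace
    set s2 := (H'.val * H'.val).trace
    set s3 := ∑ i, l i * wq X (t, H') i with hs3
    set s4 := ∑ i, wq X (t, H') i * wq X (t, H') i
    have f7 : t * (q + c * s1 + t * E) ≤ t * (a + c * s3) := by nlinarith
    have f8 : q + c * s1 + t * E ≤ a + c * s3 := le_of_mul_le_mul_left f7 hp
    have f9 : c * (2 * (s3 - s1)) = c * (t * (s2 - s4)) := by
      congr 1
      linarith
    rw [div_mul_eq_mul_div, le_div_iff₀ hp]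
    nlinarith

/-! ### Recovery sequences -/

lemma exists_P {n : ℕ} (X Y H : Sym n) {U : Matrix (Fin n) (Fin n) ℝ} (y v : Fin n → ℝ)
    (σ : Equiv.Perm (Fin n)) (hU : U ∈ eigOrth X.val)
    (hYdec : Y.val = U * Matrix.diagonal y * Uᵀ)
    (hσblock : ∀ i, eigval X.val (σ i) = eigval X.val i)
    (hv : ∀ i, v i = y (σ i))
    (hvdec : ∀ i j : Fin n, i ≤ j → eigval X.val i = eigval X.val j → v j ≤ v i)
    (heq : ipV v (lambdaDir X.val U H.val) = ipM Y H) :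
    ∃ P : Matrix (Fin n) (Fin n) ℝ, P * Pᵀ = 1 ∧
      Matrix.diagonal (eigval X.val) = P * Matrix.diagonal (eigval X.val) * Pᵀ ∧
      Matrix.diagonal y = P * Matrix.diagonal v * Pᵀ ∧
      blkd (eigval X.val) (Uᵀ * H.val * U)
        = P * Matrix.diagonal (lambdaDir X.val U H.val) * Pᵀ := by
  obtain ⟨Q, hQ, hQb, hGQ, hws⟩ := lambdaDir_spec X H hU
  set l := eigval X.val with hl
  set w := lambdaDir X.val U H.val with hw
  set G := Uᵀ * H.val * U with hG
  have hla : Antitone l := eigval_antitone _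
  obtain ⟨c, hc1, hc2, hc3⟩ := ((exists_c_sorted hla hvdec).and
    ((exists_c_sorted hla hws).and (exists_c_sep l y))).exists
  have hadd : ∀ a : Fin n → ℝ, Matrix.diagonal (fun i => a i + c * l i)
      = Matrix.diagonal a + c • Matrix.diagonal l := by
    intro a; rw [← Matrix.diagonal_smul, Matrix.diagonal_add]; rfl
  have e5 : blkd l G = Q * Matrix.diagonal w * Qᵀ := blkd_conj hQ hQb hGQ
  have e6 := diag_comm_of_block hQ hQb
  have hA : Matrix.diagonal (fun i => y i + c * l i)
      = ((1 : Matrix (Fin n) (Fin n) ℝ).submatrix id σ) * Matrix.diagonal (fun i => v i + c * l i)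
        * ((1 : Matrix (Fin n) (Fin n) ℝ).submatrix id σ)ᵀ := by
    have h := perm_cols 1 (fun i => y i + c * l i) σ
    have h2 : (fun i => (fun i => y i + c * l i) (σ i)) = fun i => v i + c * l i := by
      funext i; simp only [hv, hσblock]
    rw [h2] at h
    rw [h]; simp
  have hB : blkd l G + c • Matrix.diagonal l
      = Q * Matrix.diagonal (fun i => w i + c * l i) * Qᵀ := by
    rw [hadd, Matrix.mul_add, Matrix.add_mul, ← e5, Matrix.mul_smul, Matrix.smul_mul, ← e6]
  have hdb : (Matrix.diagonal y * blkd l G).trace = ipV v w := by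
    rw [heq, ipM, hYdec, trace_conj_right]
    simp only [Matrix.trace, Matrix.diag, Matrix.diagonal_mul, blkd, Matrix.of_apply, if_true, hG]
  have hlb : (Matrix.diagonal l * blkd l G).trace = ∑ i, l i * w i := by
    rw [e5]
    nth_rewrite 1 [e6]
    exact trace_sq_conj hQ l w
  have hyl : ∑ i, y i * l i = ∑ i, v i * l i := by
    rw [← Equiv.sum_comp σ]
    refine Finset.sum_congr rfl fun i _ => ?_
    rw [hv, hσblock]
  have htr : (Matrix.diagonal (fun i => y i + c * l i) * (blkd l G + c • Matrix.diagonal l)).trace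
      = ∑ i, (v i + c * l i) * (w i + c * l i) := by
    rw [hadd, Matrix.add_mul, Matrix.mul_add, Matrix.mul_add, Matrix.trace_add, Matrix.trace_add,
      Matrix.trace_add, Matrix.smul_mul, Matrix.smul_mul, Matrix.mul_smul, Matrix.mul_smul]
    simp only [Matrix.trace_smul, smul_eq_mul, hdb, hlb, Matrix.diagonal_mul_diagonal,
      Matrix.trace_diagonal, hyl]
    simp only [ipV, Finset.mul_sum, ← Finset.sum_add_distrib]
    refine Finset.sum_congr rfl fun i _ => ?_
    ring
  obtain ⟨P, hP, hPA, hPB⟩ := fan_eq (perm_cols_orth (by simp) σ) hQ hc1 hc2 hA hB htr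
  have hPb : ∀ i j, l i ≠ l j → P i j = 0 := by
    intro i j hij
    have h1 : Matrix.diagonal (fun i => y i + c * l i) * P
        = P * Matrix.diagonal (fun i => v i + c * l i) := by
      rw [hPA, Matrix.mul_assoc, orth_comm hP, Matrix.mul_one]
    have h2 := congrFun (congrFun h1 i) j
    rw [Matrix.diagonal_mul, Matrix.mul_diagonal] at h2
    have h3 := hc3 i (σ j) (by rw [hσblock]; exact hij)
    rw [hv j, ← hσblock j] at h2
    by_contra h
    apply h3
    have : P i j * ((y i + c * l i) - (y (σ j) + c * l (σ j))) = 0 := by linarith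
    rcases mul_eq_zero.mp this with h' | h'
    · exact absurd h' h
    · linarith
  have hPl := diag_comm_of_block hP hPb
  refine ⟨P, hP, hPl, ?_, ?_⟩
  · rw [hadd, hadd, Matrix.mul_add, Matrix.add_mul, Matrix.mul_smul, Matrix.smul_mul, ← hPl] at hPA
    exact add_right_cancel hPA
  · rw [hadd, Matrix.mul_add, Matrix.add_mul, Matrix.mul_smul, Matrix.smul_mul, ← hPl] at hPB
    exact add_right_cancel hPB

lemma step_conj {n : ℕ} {U P M : Matrix (Fin n) (Fin n) ℝ} {l : Fin n → ℝ} {t : ℝ}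
    (hC : (1 + t • M) * (1 + t • M)ᵀ = 1)
    (hPl : Matrix.diagonal l = P * Matrix.diagonal l * Pᵀ) (w : Fin n → ℝ) :
    (U * (1 + t • M) * P) * Matrix.diagonal (l + t • w) * (U * (1 + t • M) * P)ᵀ
      = U * Matrix.diagonal l * Uᵀ + t • (U * (cm M l * (1 + t • M)ᵀ
        + (1 + t • M) * (P * Matrix.diagonal w * Pᵀ) * (1 + t • M)ᵀ) * Uᵀ) := by
  have h1 := conj_sub hC l
  set C := 1 + t • M with hCdef
  clear_value C
  have h0 : Matrix.diagonal (l + t • w) = Matrix.diagonal l + t • Matrix.diagonal w := by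
    rw [← Matrix.diagonal_smul, Matrix.diagonal_add]; rfl
  calc _ = U * (C * (P * Matrix.diagonal (l + t • w) * Pᵀ) * Cᵀ) * Uᵀ := by
        simp only [Matrix.transpose_mul, Matrix.mul_assoc]
    _ = U * (C * Matrix.diagonal l * Cᵀ + t • (C * (P * Matrix.diagonal w * Pᵀ) * Cᵀ)) * Uᵀ := by
        rw [h0, Matrix.mul_add, Matrix.add_mul, ← hPl, Matrix.mul_smul, Matrix.smul_mul,
          Matrix.mul_add, Matrix.add_mul, Matrix.mul_smul, Matrix.smul_mul]
    _ = _ := by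
        rw [h1, add_assoc, ← smul_add, Matrix.mul_add, Matrix.add_mul, Matrix.mul_smul,
          Matrix.smul_mul]

lemma step_trace {n : ℕ} {P M : Matrix (Fin n) (Fin n) ℝ} {l y v : Fin n → ℝ} {t : ℝ}
    (ht : 0 < t) (hC : (1 + t • M) * (1 + t • M)ᵀ = 1) (hP : P * Pᵀ = 1)
    (hPy : Matrix.diagonal y = P * Matrix.diagonal v * Pᵀ) (w : Fin n → ℝ) :
    2 / t * (ipV v w - (Matrix.diagonal y * (cm M l * (1 + t • M)ᵀ
        + (1 + t • M) * (P * Matrix.diagonal w * Pᵀ) * (1 + t • M)ᵀ)).trace)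
      = -2 * ((cm Mᵀ y * (M * Matrix.diagonal l)).trace
        + (cm Mᵀ y * ((1 + t • M) * (P * Matrix.diagonal w * Pᵀ))).trace) := by
  have h1 := conj_sub hC l
  set W := P * Matrix.diagonal w * Pᵀ with hW
  have hCt : (1 + t • Mᵀ) * (1 + t • Mᵀ)ᵀ = 1 := by
    have := orth_transpose hC
    simpa using this
  have h2 := path_expand hCt y l W
  have hTr : (1 + t • Mᵀ)ᵀ = 1 + t • M := by simp
  have hTr2 : (1 + t • Mᵀ) = (1 + t • M)ᵀ := by simp
  rw [hTr, Matrix.transpose_transpose, hTr2] at h2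
  set C := 1 + t • M with hCdef
  have h3 : (Matrix.diagonal y * W).trace = ipV v w := by
    rw [hPy]; exact trace_sq_conj hP v w
  have h4 : (Cᵀ * Matrix.diagonal y * C * (Matrix.diagonal l + t • W)).trace
      = ∑ i, y i * l i + t * (Matrix.diagonal y * (cm M l * Cᵀ + C * W * Cᵀ)).trace := by
    have : (Cᵀ * Matrix.diagonal y * C * (Matrix.diagonal l + t • W)).trace
        = (Matrix.diagonal y * (C * Matrix.diagonal l * Cᵀ + t • (C * W * Cᵀ))).trace := by
      rw [Matrix.mul_assoc, Matrix.mul_assoc, Matrix.trace_mul_comm]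
      simp only [Matrix.mul_assoc, Matrix.mul_add, Matrix.add_mul, Matrix.mul_smul, Matrix.smul_mul]
    rw [this, h1, add_assoc, ← smul_add, Matrix.mul_add, Matrix.trace_add, Matrix.mul_smul,
      Matrix.trace_smul, smul_eq_mul, Matrix.diagonal_mul_diagonal, Matrix.trace_diagonal]
  rw [h4, h3] at h2
  rw [div_mul_eq_mul_div, div_eq_iff ht.ne']
  have h5 : t * ((Matrix.diagonal y * (cm M l * Cᵀ + C * W * Cᵀ)).trace - ipV v w)
      = t * (t * ((cm Mᵀ y * (M * Matrix.diagonal l)).trace + (cm Mᵀ y * (C * W)).trace)) := by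
    linarith
  have h6 := mul_left_cancel₀ ht.ne' h5
  linarith

lemma upper_second {n : ℕ} (X Y H : Sym n) {U P : Matrix (Fin n) (Fin n) ℝ} (y v : Fin n → ℝ)
    (hU : U ∈ eigOrth X.val)
    (hYdec : Y.val = U * Matrix.diagonal y * Uᵀ) (hP : P * Pᵀ = 1)
    (hPl : Matrix.diagonal (eigval X.val) = P * Matrix.diagonal (eigval X.val) * Pᵀ)
    (hPy : Matrix.diagonal y = P * Matrix.diagonal v * Pᵀ)
    (hPb : blkd (eigval X.val) (Uᵀ * H.val * U)
        = P * Matrix.diagonal (lambdaDir X.val U H.val) * Pᵀ)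
    (t : ℕ → ℝ) (ht : ∀ k, 0 < t k) (ht0 : Tendsto t atTop (𝓝 0))
    (ws : ℕ → Fin n → ℝ) (hws : Tendsto ws atTop (𝓝 (lambdaDir X.val U H.val))) :
    ∃ Hs : ℕ → Sym n, Tendsto Hs atTop (𝓝 H) ∧
      (∀ k, ∃ τ : Equiv.Perm (Fin n), eigval (X.val + t k • (Hs k).val)
        = fun i => (eigval X.val + t k • ws k) (τ i)) ∧
      Tendsto (fun k => 2 / t k * (ipV v (ws k) - ipM Y (Hs k))) atTop
        (𝓝 (curvTerm X.val U H.val y)) := by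
  have hcurv := curvTerm_eq y hU H.2
  obtain ⟨hUo, hX⟩ := hU
  set l := eigval X.val with hl
  set w := lambdaDir X.val U H.val with hw
  set G := Uᵀ * H.val * U with hG
  have hGs : G.IsSymm := by
    have h2 : H.valᵀ = H.val := H.2
    rw [Matrix.IsSymm, hG, Matrix.transpose_mul, Matrix.transpose_mul, h2,
      Matrix.transpose_transpose, Matrix.mul_assoc]
  obtain ⟨M, hMo, hMlim⟩ := exists_path (genK l G) (genK_skew l hGs)
  have ht1 : Tendsto t atTop (𝓝[>] 0) :=
    tendsto_nhdsWithin_iff.mpr ⟨ht0, Eventually.of_forall ht⟩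
  have hM := hMlim.comp ht1
  have hCt : Tendsto (fun k => 1 + t k • M (t k)) atTop (𝓝 1) := tendsto_C hM ht0
  have hW : Tendsto (fun k => P * Matrix.diagonal (ws k) * Pᵀ) atTop (𝓝 (blkd l G)) := by
    rw [hPb]
    refine tendsto_mul_mat (tendsto_mul_mat tendsto_const_nhds ?_) tendsto_const_nhds
    exact ((continuous_id.matrix_diagonal).tendsto w).comp hws
  let Z : ℕ → Matrix (Fin n) (Fin n) ℝ := fun k => cm (M (t k)) l * (1 + t k • M (t k))ᵀ
        + (1 + t k • M (t k)) * (P * Matrix.diagonal (ws k) * Pᵀ) * (1 + t k • M (t k))ᵀ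
  have hconj : ∀ k, (U * (1 + t k • M (t k)) * P) * Matrix.diagonal (l + t k • ws k)
      * (U * (1 + t k • M (t k)) * P)ᵀ = X.val + t k • (U * Z k * Uᵀ) := by
    intro k
    rw [step_conj (hMo _) hPl, ← hX]
  have hsymm : ∀ k, (U * Z k * Uᵀ) ∈ symSubmodule n := by
    intro k
    have h1 : X.val + t k • (U * Z k * Uᵀ) ∈ symSubmodule n := by
      rw [← hconj]; exact isSymm_conj _ _
    have h2 := (symSubmodule n).sub_mem h1 X.2
    rw [add_sub_cancel_left] at h2
    exact ((symSubmodule n).smul_mem_iff (ht k).ne').mp h2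
  refine ⟨fun k => ⟨U * Z k * Uᵀ, hsymm k⟩, ?_, ?_, ?_⟩
  · rw [tendsto_subtype_rng]
    have hH : H.val = U * (cm (genK l G) l * 1ᵀ + 1 * blkd l G * 1ᵀ) * Uᵀ := by
      rw [Matrix.transpose_one, Matrix.mul_one, Matrix.mul_one, Matrix.one_mul, cm_genK_add_blkd, hG]
      calc H.val = (U * Uᵀ) * H.val * (U * Uᵀ) := by rw [hUo, Matrix.one_mul, Matrix.mul_one]
        _ = _ := by simp only [Matrix.mul_assoc]
    rw [hH]
    refine tendsto_mul_mat (tendsto_mul_mat tendsto_const_nhds (Tendsto.add ?_ ?_))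
      tendsto_const_nhds
    · exact tendsto_mul_mat (tendsto_cm hM l) (tendsto_transpose hCt)
    · exact tendsto_mul_mat (tendsto_mul_mat hCt hW) (tendsto_transpose hCt)
  · intro k
    have ho : (U * (1 + t k • M (t k)) * P) * (U * (1 + t k • M (t k)) * P)ᵀ = 1 :=
      orth_mul hP (orth_mul (hMo _) hUo)
    obtain ⟨τ, hτ⟩ := eigval_conj_perm ho (l + t k • ws k)
    rw [hconj] at hτ
    exact ⟨τ, hτ⟩
  · have hfun : ∀ k, 2 / t k * (ipV v (ws k) - ipM Y ⟨U * Z k * Uᵀ, hsymm k⟩)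
        = -2 * ((cm (M (t k))ᵀ y * (M (t k) * Matrix.diagonal l)).trace
        + (cm (M (t k))ᵀ y * ((1 + t k • M (t k)) * (P * Matrix.diagonal (ws k) * Pᵀ))).trace) := by
      intro k
      rw [← step_trace (ht k) (hMo _) hP hPy, ipM, hYdec, trace_conj_right]
      have : Uᵀ * (U * Z k * Uᵀ) * U = Z k := by
        calc _ = (Uᵀ * U) * Z k * (Uᵀ * U) := by simp only [Matrix.mul_assoc]
          _ = _ := by rw [orth_comm hUo, Matrix.one_mul, Matrix.mul_one]
      simp only [this]
      rfl
    simp only [hfun]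
    have hlim : curvTerm X.val U H.val y
        = -2 * ((cm (genK l G)ᵀ y * (genK l G * Matrix.diagonal l)).trace
          + (cm (genK l G)ᵀ y * (1 * blkd l G)).trace) := by
      have hneg : cm (genK l G)ᵀ y = - cm (genK l G) y := by
        rw [genK_skew l hGs, cm, cm, Matrix.neg_mul, Matrix.mul_neg]; abel
      have h1 := trace_half l y hGs
      rw [hcurv, hneg, Matrix.one_mul, Matrix.neg_mul, Matrix.neg_mul, Matrix.trace_neg,
        Matrix.trace_neg, trace_cm_blkd, cm, ← h1]
      ring
    rw [hlim]
    refine Tendsto.const_mul _ (Tendsto.add ?_ ?_)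
    · exact tendsto_trace (tendsto_mul_mat (tendsto_cm (tendsto_transpose hM) y)
        (tendsto_mul_mat hM tendsto_const_nhds))
    · exact tendsto_trace (tendsto_mul_mat (tendsto_cm (tendsto_transpose hM) y)
        (tendsto_mul_mat hCt hW))

/-! ### Extended-real bookkeeping -/

lemma quot_shift (a : EReal) (r t p q : ℝ) (ht : 0 < t) :
    (((2 / t ^ 2 : ℝ)) : EReal) * (a - (r : EReal) - ((t * q : ℝ) : EReal))
      = (((2 / t ^ 2 : ℝ)) : EReal) * (a - (r : EReal) - ((t * p : ℝ) : EReal))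
        + ((2 / t * (p - q) : ℝ) : EReal) := by
  have h2 : 0 < 2 / t ^ 2 := by positivity
  induction a with
  | bot =>
    rw [EReal.bot_sub, EReal.bot_sub, EReal.bot_sub, EReal.coe_mul_bot_of_pos h2, EReal.bot_add]
  | top =>
    rw [EReal.top_sub_coe, EReal.top_sub_coe, EReal.top_sub_coe, EReal.coe_mul_top_of_pos h2,
      EReal.top_add_coe]
  | coe a =>
    norm_cast
    field_simp
    ring

lemma quot_lower (a : EReal) (r t q γ : ℝ) (ht : 0 < t)
    (h : ((r + t * q + t * γ : ℝ) : EReal) ≤ a) :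
    ((2 / t * γ : ℝ) : EReal)
      ≤ (((2 / t ^ 2 : ℝ)) : EReal) * (a - (r : EReal) - ((t * q : ℝ) : EReal)) := by
  have h2 : 0 < 2 / t ^ 2 := by positivity
  induction a with
  | bot => exact absurd (le_bot_iff.mp h) (EReal.coe_ne_bot _)
  | top =>
    rw [EReal.top_sub_coe, EReal.top_sub_coe, EReal.coe_mul_top_of_pos h2]; exact le_top
  | coe a =>
    norm_cast at h ⊢
    have : 2 / t * γ = 2 / t ^ 2 * (t * γ) := by field_simp
    rw [this]
    exact mul_le_mul_of_nonneg_left (by linarith) h2.le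

/-- Reindexing of coordinates, as a homeomorphism. -/
def permHomeo {n : ℕ} (σ : Equiv.Perm (Fin n)) : (Fin n → ℝ) ≃ₜ (Fin n → ℝ) where
  toFun w := fun i => w (σ.symm i)
  invFun w := fun i => w (σ i)
  left_inv w := by funext i; simp
  right_inv w := by funext i; simp
  continuous_toFun := by fun_prop
  continuous_invFun := by fun_prop

lemma permHomeo_apply {n : ℕ} (σ : Equiv.Perm (Fin n)) (w : Fin n → ℝ) :
    permHomeo σ w = fun i => w (σ.symm i) := rfl

lemma ipV_perm {n : ℕ} {σ : Equiv.Perm (Fin n)} {y v : Fin n → ℝ} (hv : ∀ i, v i = y (σ i))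
    (w : Fin n → ℝ) : ipV y (permHomeo σ w) = ipV v w := by
  unfold ipV
  rw [← Equiv.sum_comp σ]
  refine Finset.sum_congr rfl fun i _ => ?_
  rw [hv, permHomeo_apply]; simp

lemma theta_perm {n : ℕ} {θ : (Fin n → ℝ) → EReal} (hsym : SymmetricFn θ)
    {σ : Equiv.Perm (Fin n)} {l : Fin n → ℝ} (hσ : ∀ i, l (σ i) = l i) (t : ℝ) (w : Fin n → ℝ) :
    θ (l + t • permHomeo σ w) = θ (l + t • w) := by
  rw [← hsym (l + t • w) σ.symm]
  congr 1
  funext i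
  have : l (σ.symm i) = l i := by
    have := hσ (σ.symm i); simpa using this.symm
  simp [permHomeo_apply, this]

lemma sdq2_perm {n : ℕ} {θ : (Fin n → ℝ) → EReal} (hsym : SymmetricFn θ)
    {σ : Equiv.Perm (Fin n)} {l y v : Fin n → ℝ} (hσ : ∀ i, l (σ i) = l i)
    (hv : ∀ i, v i = y (σ i)) (t : ℝ) (w : Fin n → ℝ) :
    sdq2 ipV θ l y t (permHomeo σ w) = sdq2 ipV θ l v t w := by
  unfold sdq2
  rw [theta_perm hsym hσ, ipV_perm hv]

lemma subderiv2_perm {n : ℕ} {θ : (Fin n → ℝ) → EReal} (hsym : SymmetricFn θ)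
    {σ : Equiv.Perm (Fin n)} {l y v : Fin n → ℝ} (hσ : ∀ i, l (σ i) = l i)
    (hv : ∀ i, v i = y (σ i)) (w : Fin n → ℝ) :
    subderiv2 ipV θ l y (permHomeo σ w) = subderiv2 ipV θ l v w := by
  unfold subderiv2
  have hm : Filter.map (Prod.map id (permHomeo σ)) ((𝓝[>] (0 : ℝ)) ×ˢ 𝓝 w)
      = (𝓝[>] (0 : ℝ)) ×ˢ 𝓝 (permHomeo σ w) := by
    rw [← (permHomeo σ).map_nhds_eq, ← Filter.prod_map_map_eq', Filter.map_id]
  rw [← hm, Filter.liminf, Filter.map_map, Filter.liminf]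
  congr 2
  funext p
  exact sdq2_perm hsym hσ hv p.1 p.2

lemma ted_perm {n : ℕ} {θ : (Fin n → ℝ) → EReal} (hsym : SymmetricFn θ)
    {σ : Equiv.Perm (Fin n)} {l y v : Fin n → ℝ} (hσ : ∀ i, l (σ i) = l i)
    (hv : ∀ i, v i = y (σ i)) (h : TwiceEpiDiff ipV θ l y) : TwiceEpiDiff ipV θ l v := by
  refine ⟨h.1, fun t ht ht0 w => ?_⟩
  obtain ⟨ws, hws, hlim⟩ := h.2 t ht ht0 (permHomeo σ w)
  refine ⟨fun k => (permHomeo σ).symm (ws k), ?_, ?_⟩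
  · have := ((permHomeo σ).symm.continuous.tendsto _).comp hws
    rw [Homeomorph.symm_apply_apply] at this
    exact this
  · rw [subderiv2_perm hsym hσ hv] at hlim
    refine hlim.congr fun k => ?_
    rw [← sdq2_perm hsym hσ hv, Homeomorph.apply_symm_apply]

lemma nrm_ipV_nonneg {n : ℕ} (x : Fin n → ℝ) : 0 ≤ nrm ipV x := Real.sqrt_nonneg _

lemma nrm_pos {n : ℕ} {x : Fin n → ℝ} (hx : x ≠ 0) : 0 < nrm ipV x := by
  apply Real.sqrt_pos.mpr
  obtain ⟨i, hi⟩ := Function.ne_iff.mp hx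
  refine Finset.sum_pos' (fun i _ => mul_self_nonneg _) ⟨i, Finset.mem_univ _, ?_⟩
  exact mul_self_pos.mpr hi

lemma nrm_smul_perm {n : ℕ} (σ : Equiv.Perm (Fin n)) {t : ℝ} (ht : 0 < t) (w : Fin n → ℝ) :
    nrm ipV (t • permHomeo σ w) = t * nrm ipV w := by
  have h : ipV (t • permHomeo σ w) (t • permHomeo σ w) = t ^ 2 * ipV w w := by
    have h1 : ipV (permHomeo σ w) (permHomeo σ w) = ipV w w := by
      rw [ipV_perm (v := w)]
      intro i; simp [permHomeo_apply]
    rw [← h1]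
    unfold ipV
    rw [Finset.mul_sum]
    refine Finset.sum_congr rfl fun i _ => ?_
    simp only [Pi.smul_apply, smul_eq_mul]; ring
  rw [nrm, h, Real.sqrt_mul (sq_nonneg t), Real.sqrt_sq ht.le, nrm]

lemma reg_lower {n : ℕ} {θ : (Fin n → ℝ) → EReal} {l y : Fin n → ℝ}
    (h : RegSubgrad ipV θ l y) {r : ℝ} (hr : θ l = (r : EReal)) {δ : ℝ} (hδ : 0 < δ) :
    ∀ᶠ z in 𝓝 l, ((r + ipV y (z - l) - δ * nrm ipV (z - l) : ℝ) : EReal) ≤ θ z := by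
  have h1 : ((-δ : ℝ) : EReal) < 0 := by exact_mod_cast neg_lt_zero.mpr hδ
  have h2 := eventually_lt_of_lt_liminf (h1.trans_le h.2)
  rw [eventually_nhdsWithin_iff] at h2
  filter_upwards [h2] with z hz
  by_cases hzl : z = l
  · subst hzl
    rw [hr]
    simp [nrm, ipV]
  · have hz' := hz hzl
    have hN := nrm_pos (sub_ne_zero.mpr hzl)
    set N := nrm ipV (z - l)
    have hi : 0 < N⁻¹ := inv_pos.mpr hN
    rw [hr] at hz'
    generalize θ z = a at hz' ⊢
    induction a with
    | bot =>
      rw [EReal.bot_sub, EReal.bot_sub, EReal.coe_mul_bot_of_pos hi] at hz'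
      exact absurd hz' (by simp)
    | top => exact le_top
    | coe a =>
      norm_cast at hz' ⊢
      rw [inv_mul_eq_div, lt_div_iff₀ hN] at hz'
      linarith

lemma spec_quot {n : ℕ} {θ : (Fin n → ℝ) → EReal} (X Y : Sym n) (v w : Fin n → ℝ) {r : ℝ}
    (hr : θ (eigval X.val) = (r : EReal)) {t : ℝ} (ht : 0 < t) (H : Sym n)
    (hH : θ (eigval (X.val + t • H.val)) = θ (eigval X.val + t • w)) :
    sdq2 ipM (specFn θ) X Y t H = sdq2 ipV θ (eigval X.val) v t w
      + ((2 / t * (ipV v w - ipM Y H) : ℝ) : EReal) := by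
  unfold sdq2
  have h1 : specFn θ (X + t • H) = θ (eigval X.val + t • w) := hH
  have h2 : specFn θ X = (r : EReal) := hr
  rw [h1, h2, hr]
  exact quot_shift _ r t (ipV v w) (ipM Y H) ht

lemma eigval_wq {n : ℕ} (X H : Sym n) {t : ℝ} (ht : 0 < t) :
    eigval (X.val + t • H.val) = eigval X.val + t • wq X (t, H) := by
  funext i
  exact eigval_pert X (t, H) ht.ne' i

lemma tendsto_ipV {α : Type*} {n : ℕ} {F : Filter α} {f g : α → Fin n → ℝ} {a b : Fin n → ℝ}
    (hf : Tendsto f F (𝓝 a)) (hg : Tendsto g F (𝓝 b)) :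
    Tendsto (fun p => ipV (f p) (g p)) F (𝓝 (ipV a b)) :=
  tendsto_finsetSum _ fun i _ => (tendsto_pi_nhds.mp hf i).mul (tendsto_pi_nhds.mp hg i)

lemma tendsto_ipM_F {n : ℕ} (Y H : Sym n) :
    Tendsto (fun p : ℝ × Sym n => ipM Y p.2) ((𝓝[>] (0 : ℝ)) ×ˢ 𝓝 H) (𝓝 (ipM Y H)) :=
  tendsto_trace (tendsto_mul_mat tendsto_const_nhds (tendsto_snd_F H))

lemma critical_eq {n : ℕ} {θ : (Fin n → ℝ) → EReal} (X Y H : Sym n)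
    {U : Matrix (Fin n) (Fin n) ℝ} (y v : Fin n → ℝ) (σ : Equiv.Perm (Fin n))
    (hsym : SymmetricFn θ) (hy : RegSubgrad ipV θ (eigval X.val) y)
    (hU : U ∈ eigOrth X.val)
    (hYdec : Y.val = U * Matrix.diagonal y * Uᵀ)
    (hσblock : ∀ i, eigval X.val (σ i) = eigval X.val i)
    (hv : ∀ i, v i = y (σ i))
    (hvdec : ∀ i j : Fin n, i ≤ j → eigval X.val i = eigval X.val j → v j ≤ v i)
    {r : ℝ} (hr : θ (eigval X.val) = (r : EReal))
    (hfin : subderiv2 ipM (specFn θ) X Y H ≠ ⊤) :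
    ipV v (lambdaDir X.val U H.val) = ipM Y H := by
  have hwF := wq_tendsto X H hU
  have hgap : Tendsto (fun p => ipV v (wq X p) - ipM Y p.2) ((𝓝[>] (0 : ℝ)) ×ˢ 𝓝 H)
      (𝓝 (ipV v (lambdaDir X.val U H.val) - ipM Y H)) :=
    (tendsto_ipV tendsto_const_nhds hwF).sub (tendsto_ipM_F Y H)
  have ht0 : Tendsto (fun p : ℝ × Sym n => p.1) ((𝓝[>] (0 : ℝ)) ×ˢ 𝓝 H) (𝓝 0) :=
    (tendsto_fst_F H).mono_right nhdsWithin_le_nhds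
  refine le_antisymm ?_ ?_
  · by_contra hlt
    push Not at hlt
    apply hfin
    set γ := ipV v (lambdaDir X.val U H.val) - ipM Y H with hγ
    have hγ0 : 0 < γ := by linarith
    set N := nrm ipV (lambdaDir X.val U H.val) + 1 with hN
    have hN0 : 0 < N := by have := nrm_ipV_nonneg (lambdaDir X.val U H.val); linarith
    have hnrm : Tendsto (fun p => nrm ipV (wq X p)) ((𝓝[>] (0 : ℝ)) ×ˢ 𝓝 H)
        (𝓝 (nrm ipV (lambdaDir X.val U H.val))) :=
      (Real.continuous_sqrt.tendsto _).comp (tendsto_ipV hwF hwF)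
    have hδ : 0 < γ / (4 * N) := by positivity
    have hz : Tendsto (fun p : ℝ × Sym n => eigval X.val + p.1 • permHomeo σ (wq X p))
        ((𝓝[>] (0 : ℝ)) ×ˢ 𝓝 H) (𝓝 (eigval X.val)) := by
      have := (tendsto_const_nhds (x := eigval X.val)).add
        (ht0.smul (((permHomeo σ).continuous.tendsto _).comp hwF))
      simpa using this
    have hreg := hz.eventually (reg_lower hy hr hδ)
    have hev : ∀ᶠ p : ℝ × Sym n in (𝓝[>] (0 : ℝ)) ×ˢ 𝓝 H,
        ((2 / p.1 * (γ / 4) : ℝ) : EReal) ≤ sdq2 ipM (specFn θ) X Y p.1 p.2 := by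
      filter_upwards [hreg, pos_F H, hgap.eventually (lt_mem_nhds (half_lt_self hγ0)),
        hnrm.eventually (gt_mem_nhds (lt_add_one _))] with p h1 h2 h3 h4
      obtain ⟨t, H'⟩ := p
      simp only at h1 h2 h3 h4 ⊢
      rw [add_sub_cancel_left, nrm_smul_perm σ h2, theta_perm hsym hσblock,
        ← eigval_wq X H' h2] at h1
      have h5 : ipV y (t • permHomeo σ (wq X (t, H'))) = t * ipV v (wq X (t, H')) := by
        rw [← ipV_perm hv]
        unfold ipV
        rw [Finset.mul_sum]
        refine Finset.sum_congr rfl fun i _ => ?_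
        simp only [Pi.smul_apply, smul_eq_mul]; ring
      rw [h5] at h1
      have h6 : specFn θ X = (r : EReal) := hr
      have h7 : γ / (4 * N) * nrm ipV (wq X (t, H')) ≤ γ / 4 := by
        calc _ ≤ γ / (4 * N) * N := mul_le_mul_of_nonneg_left h4.le hδ.le
          _ = γ / 4 := by field_simp
      unfold sdq2
      rw [h6]
      refine quot_lower _ r t _ _ h2 (le_trans ?_ h1)
      norm_cast
      nlinarith
    refine EReal.eq_top_iff_forall_lt _ |>.mpr fun c => ?_
    refine lt_of_lt_of_le (EReal.coe_lt_coe_iff.mpr (lt_add_one c)) ?_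
    refine le_liminf_of_le (by isBoundedDefault) ?_
    have hpos : 0 < γ / (2 * (|c + 1| + 1)) := by positivity
    filter_upwards [hev, pos_F H, ht0.eventually (gt_mem_nhds hpos)] with p h1 h2 h3
    refine le_trans ?_ h1
    norm_cast
    rw [lt_div_iff₀ (by positivity)] at h3
    rw [div_mul_eq_mul_div, le_div_iff₀ h2]
    have := le_abs_self (c + 1)
    nlinarith
  · obtain ⟨b, hb, hbl⟩ := lower_second X Y H y v σ hU hYdec hσblock hv hvdec
    have h0 : Tendsto (fun p : ℝ × Sym n => p.1 * b p / 2) ((𝓝[>] (0 : ℝ)) ×ˢ 𝓝 H) (𝓝 0) := by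
      have := (ht0.mul hb).div_const 2
      simpa using this
    have := le_of_tendsto_of_tendsto h0 hgap (by
      filter_upwards [hbl, pos_F H] with p h1 h2
      rw [div_mul_eq_mul_div, le_div_iff₀ h2] at h1
      linarith)
    linarith

lemma tendsto_add_coe {α : Type*} {F : Filter α} {f : α → EReal} {g : α → ℝ} {a : EReal} {b : ℝ}
    (hf : Tendsto f F (𝓝 a)) (hg : Tendsto g F (𝓝 b)) :
    Tendsto (fun p => f p + (g p : EReal)) F (𝓝 (a + (b : EReal))) := by
  have h := EReal.continuousAt_add (p := (a, (b : EReal))) (Or.inr (EReal.coe_ne_bot b))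
    (Or.inr (EReal.coe_ne_top b))
  exact h.tendsto.comp (hf.prodMk_nhds ((EReal.tendsto_coe).mpr hg))

/-- Theorem 3.5, formula: the second subderivative of the spectral function
`g = θ ∘ λ`, at points where it is finite. -/
theorem second_subderiv_spectral_formula {n : ℕ} (θ : (Fin n → ℝ) → EReal)
    (X Y : Sym n) (U : Matrix (Fin n) (Fin n) ℝ) (y v : Fin n → ℝ) (σ : Equiv.Perm (Fin n))
    (hsym : SymmetricFn θ) (hLip : LocLipRelDom ipV θ)
    (hlsc : LowerSemicontinuous (specFn θ))
    (hY : RegSubgrad ipM (specFn θ) X Y)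
    (hy : RegSubgrad ipV θ (eigval X.val) y)
    (hU : U ∈ eigOrth X.val)
    (hYdec : Y.val = U * Matrix.diagonal y * Uᵀ)
    (hted : TwiceEpiDiff ipV θ (eigval X.val) y)
    (hσblock : ∀ i, eigval X.val (σ i) = eigval X.val i)
    (hv : ∀ i, v i = y (σ i))
    (hvdec : ∀ i j : Fin n, i ≤ j → eigval X.val i = eigval X.val j → v j ≤ v i) :
    ∀ H : Sym n, subderiv2 ipM (specFn θ) X Y H ≠ ⊤ →
      subderiv2 ipM (specFn θ) X Y H =
        subderiv2 ipV θ (eigval X.val) v (lambdaDir X.val U H.val)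
          + ((curvTerm X.val U H.val y : ℝ) : EReal) := by
  intro H hfin
  obtain ⟨r, hr⟩ : ∃ r : ℝ, θ (eigval X.val) = (r : EReal) :=
    ⟨_, (EReal.coe_toReal hted.1.1 hted.1.2).symm⟩
  have hcrit := critical_eq X Y H y v σ hsym hy hU hYdec hσblock hv hvdec hr hfin
  refine le_antisymm ?_ ?_
  · obtain ⟨P, hP, hPl, hPy, hPb⟩ := exists_P X Y H y v σ hU hYdec hσblock hv hvdec hcrit
    have hted' := ted_perm hsym hσblock hv hted
    have ht : ∀ k : ℕ, (0 : ℝ) < 1 / ((k : ℝ) + 1) := fun k => by positivity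
    have ht0 : Tendsto (fun k : ℕ => 1 / ((k : ℝ) + 1)) atTop (𝓝 0) :=
      tendsto_one_div_add_atTop_nhds_zero_nat
    obtain ⟨ws, hws, hlim⟩ := hted'.2 _ ht ht0 (lambdaDir X.val U H.val)
    obtain ⟨Hs, hHs, hτ, hcl⟩ := upper_second X Y H y v hU hYdec hP hPl hPy hPb _ ht ht0 ws hws
    have h1 := tendsto_add_coe hlim hcl
    have h2 : ∀ k : ℕ, sdq2 ipM (specFn θ) X Y (1 / ((k : ℝ) + 1)) (Hs k)
        = sdq2 ipV θ (eigval X.val) v (1 / ((k : ℝ) + 1)) (ws k)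
          + ((2 / (1 / ((k : ℝ) + 1)) * (ipV v (ws k) - ipM Y (Hs k)) : ℝ) : EReal) := by
      intro k
      refine spec_quot X Y v (ws k) hr (ht k) (Hs k) ?_
      obtain ⟨τ, hτ'⟩ := hτ k
      rw [hτ']
      exact hsym _ τ
    have h3 := h1.congr fun k => (h2 k).symm
    rw [← h3.liminf_eq]
    have hseq : Tendsto (fun k : ℕ => (1 / ((k : ℝ) + 1), Hs k)) atTop
        ((𝓝[>] (0 : ℝ)) ×ˢ 𝓝 H) :=
      (tendsto_nhdsWithin_iff.mpr ⟨ht0, Eventually.of_forall ht⟩).prodMk hHs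
    exact liminf_le_liminf_of_le (u := fun p : ℝ × Sym n => sdq2 ipM (specFn θ) X Y p.1 p.2) hseq
  · obtain ⟨b, hb, hbl⟩ := lower_second X Y H y v σ hU hYdec hσblock hv hvdec
    have hF : Tendsto (fun p : ℝ × Sym n => (p.1, wq X p)) ((𝓝[>] (0 : ℝ)) ×ˢ 𝓝 H)
        ((𝓝[>] (0 : ℝ)) ×ˢ 𝓝 (lambdaDir X.val U H.val)) :=
      (tendsto_fst_F H).prodMk (wq_tendsto X H hU)
    have h1 : subderiv2 ipV θ (eigval X.val) v (lambdaDir X.val U H.val)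
        ≤ liminf (fun p : ℝ × Sym n => sdq2 ipV θ (eigval X.val) v p.1 (wq X p))
          ((𝓝[>] (0 : ℝ)) ×ˢ 𝓝 H) :=
      liminf_le_liminf_of_le
        (u := fun p : ℝ × (Fin n → ℝ) => sdq2 ipV θ (eigval X.val) v p.1 p.2) hF
    have h2 : liminf (fun p : ℝ × Sym n => ((b p : ℝ) : EReal)) ((𝓝[>] (0 : ℝ)) ×ˢ 𝓝 H)
        = ((curvTerm X.val U H.val y : ℝ) : EReal) :=
      (EReal.tendsto_coe.mpr hb).liminf_eq
    rw [← h2]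
    refine (add_le_add_left h1 _).trans (EReal.le_liminf_add.trans ?_)
    refine liminf_le_liminf ?_
    filter_upwards [hbl, pos_F H] with p hp1 hp2
    obtain ⟨t, H'⟩ := p
    rw [spec_quot X Y v (wq X (t, H')) hr hp2 H' (by rw [eigval_wq X H' hp2])]
    exact add_le_add_right (EReal.coe_le_coe_iff.mpr hp1) _

end SpecPaper
end
end

section
/- Let θ : ℝⁿ → [−∞,+∞] be symmetric and locally Lipschitz continuous relative to its domain, let g = θ∘λ be the associated spectral function, and let Y ∈ Sⁿ be a proximal subgradient of g at X ∈ Sⁿ. Assume that for every H ∈ T_{dom g}(X), θ is parabolically epi-differentiable at λ(X) for λ'(X;H). Then dom d²g(X,Y) = C_g(X,Y), where dom d²g(X,Y) = {H ∈ Sⁿ : d²g(X,Y)(H) < +∞}. -/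
open Filter Topology Matrix

noncomputable section

namespace SpecPaper

/-! ## Generic variational analysis definitions over a topological real vector space -/

variable {E : Type*}

lemma birk {n : ℕ} (S : Matrix (Fin n) (Fin n) ℝ) (hS : S ∈ doublyStochastic ℝ (Fin n))
    (c : Fin n → Fin n → ℝ) :
    ∃ σ : Equiv.Perm (Fin n), ∑ i, c i (σ i) ≤ ∑ i, ∑ j, S i j * c i j := by
  obtain ⟨w, hw0, hw1, hwS⟩ := exists_eq_sum_perm_of_mem_doublyStochastic hS
  by_contra! hcon
  have h1 : ∑ i, ∑ j, S i j * c i j = ∑ σ : Equiv.Perm (Fin n), w σ * ∑ i, c i (σ i) := by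
    rw [← hwS]
    simp only [Matrix.sum_apply, Matrix.smul_apply, Finset.sum_mul, smul_eq_mul]
    simp_rw [Finset.sum_comm (t := (Finset.univ : Finset (Equiv.Perm (Fin n))))]
    refine Finset.sum_congr rfl fun σ _ => ?_
    rw [Finset.mul_sum]
    refine Finset.sum_congr rfl fun i _ => ?_
    simp [Equiv.Perm.permMatrix, PEquiv.toMatrix_apply, Equiv.toPEquiv_apply, ite_mul, mul_ite]
  set T := ∑ i, ∑ j, S i j * c i j with hT
  have h2 : ∑ σ : Equiv.Perm (Fin n), w σ * T < ∑ σ : Equiv.Perm (Fin n), w σ * ∑ i, c i (σ i) := by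
    apply Finset.sum_lt_sum
    · intro σ _
      exact mul_le_mul_of_nonneg_left (hcon σ).le (hw0 σ)
    · have : ∃ σ ∈ (Finset.univ : Finset (Equiv.Perm (Fin n))), 0 < w σ := by
        apply Finset.exists_lt_of_sum_lt
        simp [hw1]
      obtain ⟨σ, hσ, hp⟩ := this
      exact ⟨σ, hσ, mul_lt_mul_of_pos_left (hcon σ) hp⟩
  rw [← Finset.sum_mul, hw1, one_mul, ← h1] at h2
  exact lt_irrefl _ h2

lemma HW {n : ℕ} (P Q : Matrix (Fin n) (Fin n) ℝ) (hP : P * Pᵀ = 1) (hQ : Q * Qᵀ = 1)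
    (a b : Fin n → ℝ) :
    ∃ σ : Equiv.Perm (Fin n), ∑ i, (a i - b (σ i)) ^ 2 ≤
      ∑ i, ∑ j, ((P * diagonal a * Pᵀ - Q * diagonal b * Qᵀ) i j) ^ 2 := by
  have hP' := mul_eq_one_comm.mp hP
  have hQ' := mul_eq_one_comm.mp hQ
  set O := Pᵀ * Q with hO
  have hO1 : O * Oᵀ = 1 := by
    rw [hO, transpose_mul, transpose_transpose, Matrix.mul_assoc, ← Matrix.mul_assoc Q, hQ,
      Matrix.one_mul, hP']
  have hO2 := mul_eq_one_comm.mp hO1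
  have fro : ∀ N : Matrix (Fin n) (Fin n) ℝ, (N * Nᵀ).trace = ∑ i, ∑ j, N i j ^ 2 := by
    intro N
    simp [Matrix.trace, Matrix.mul_apply, pow_two]
  obtain ⟨σ, hσ⟩ := birk (Matrix.of fun i j => O i j ^ 2) (by
    rw [mem_doublyStochastic_iff_sum]
    refine ⟨fun i j => by simp [sq_nonneg], fun i => ?_, fun j => ?_⟩
    · have := congrFun (congrFun hO1 i) i
      simpa [Matrix.mul_apply, pow_two] using this
    · have := congrFun (congrFun hO2 j) j
      simpa [Matrix.mul_apply, pow_two] using this) (fun i j => (a i - b j) ^ 2)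
  refine ⟨σ, hσ.trans (le_of_eq ?_)⟩
  set E := P * diagonal a * Pᵀ - Q * diagonal b * Qᵀ with hE
  have hN : Pᵀ * E * Q = diagonal a * O - O * diagonal b := by
    have e1 : Pᵀ * (P * diagonal a * Pᵀ) * Q = (Pᵀ * P) * diagonal a * (Pᵀ * Q) := by noncomm_ring
    have e2 : Pᵀ * (Q * diagonal b * Qᵀ) * Q = (Pᵀ * Q) * diagonal b * (Qᵀ * Q) := by noncomm_ring
    rw [hE, Matrix.mul_sub, Matrix.sub_mul, e1, e2, hP', hQ', Matrix.one_mul, Matrix.mul_one]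
  have hfr : (E * Eᵀ).trace = ((Pᵀ * E * Q) * (Pᵀ * E * Q)ᵀ).trace := by
    have : (Pᵀ * E * Q) * (Pᵀ * E * Q)ᵀ = Pᵀ * (E * (Q * Qᵀ) * Eᵀ * P) := by
      simp only [transpose_mul, transpose_transpose]; noncomm_ring
    rw [this, Matrix.trace_mul_comm Pᵀ, hQ, Matrix.mul_one, Matrix.mul_assoc _ P, hP, Matrix.mul_one]
  rw [← fro, hfr, fro, hN]
  refine Finset.sum_congr rfl fun i _ => Finset.sum_congr rfl fun j _ => ?_
  simp only [Matrix.of_apply, Matrix.sub_apply, Matrix.diagonal_mul, Matrix.mul_diagonal]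
  ring

lemma cayley {n : ℕ} (l w : Fin n → ℝ) (K : Matrix (Fin n) (Fin n) ℝ) (hK : Kᵀ = K)
    (hKw : ∀ i j, l i = l j → K i j = if i = j then w i else 0) :
    ∃ R : ℝ × (Fin n → ℝ) → Matrix (Fin n) (Fin n) ℝ, (∀ z, ContinuousAt R (0, z)) ∧
      ∀ᶠ t in 𝓝 (0:ℝ), ∀ z, ∃ Q : Matrix (Fin n) (Fin n) ℝ, Q * Qᵀ = 1 ∧
        diagonal l + t • K + t ^ 2 • R (t, z) =
          Q * diagonal (l + t • w + (t ^ 2 / 2) • z) * Qᵀ := by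
  set A : Matrix (Fin n) (Fin n) ℝ := Matrix.of fun i j => K i j / (2 * (l j - l i)) with hA
  have hAT : Aᵀ = -A := by
    ext i j
    have : K j i = K i j := congrFun (congrFun hK i) j
    simp only [hA, transpose_apply, of_apply, Matrix.neg_apply, this]
    rw [← neg_sub, mul_neg, div_neg]
  set D := diagonal l with hD
  set W := diagonal w with hW
  have hcomm : W + (2:ℝ) • (A * D) - (2:ℝ) • (D * A) = K := by
    ext i j
    simp only [Matrix.sub_apply, Matrix.add_apply, Matrix.smul_apply, hD, hW, Matrix.mul_diagonal,
      Matrix.diagonal_mul, hA, of_apply, smul_eq_mul]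
    by_cases h : l i = l j
    · rw [hKw i j h, Matrix.diagonal_apply]
      simp [h]
    · have hij : i ≠ j := fun e => h (by rw [e])
      have : l j - l i ≠ 0 := sub_ne_zero.mpr (Ne.symm h)
      rw [Matrix.diagonal_apply_ne _ hij]
      field_simp
      ring
  have hK' : K = W + (2:ℝ) • (A * D) - (2:ℝ) • (D * A) := hcomm.symm
  have hdet : ∀ t : ℝ, (1 + t • A)ᵀ = 1 - t • A := by
    intro t
    rw [transpose_add, transpose_smul, hAT, transpose_one, smul_neg, sub_eq_add_neg]
  set pol : ℝ × (Fin n → ℝ) → Matrix (Fin n) (Fin n) ℝ := fun p =>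
    (A * W - W * A + (1/2 : ℝ) • diagonal p.2 - A * D * A + A * D * A + A * K - K * A)
    + p.1 • (A * K * A - A * W * A + (1/2 : ℝ) • (A * diagonal p.2) - (1/2 : ℝ) • (diagonal p.2 * A))
    - (p.1^2 / 2) • (A * diagonal p.2 * A) with hpol
  have hpolc : Continuous pol := by
    rw [hpol]; fun_prop
  refine ⟨fun p => (1 - p.1 • A)⁻¹ * pol p * (1 + p.1 • A)⁻¹, ?_, ?_⟩
  · intro z
    have h1 : ContinuousAt (fun p : ℝ × (Fin n → ℝ) => (1 - p.1 • A)⁻¹) (0, z) := by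
      simp only [Matrix.inv_def, Ring.inverse_eq_inv']
      apply ContinuousAt.fun_smul
      · apply ContinuousAt.inv₀
        · have : Continuous fun p : ℝ × (Fin n → ℝ) => (1 - p.1 • A).det := by fun_prop
          exact this.continuousAt
        · simp
      · have : Continuous fun p : ℝ × (Fin n → ℝ) => (1 - p.1 • A).adjugate := by fun_prop
        exact this.continuousAt
    have h2 : ContinuousAt (fun p : ℝ × (Fin n → ℝ) => (1 + p.1 • A)⁻¹) (0, z) := by
      simp only [Matrix.inv_def, Ring.inverse_eq_inv']
      apply ContinuousAt.fun_smul
      · apply ContinuousAt.inv₀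
        · have : Continuous fun p : ℝ × (Fin n → ℝ) => (1 + p.1 • A).det := by fun_prop
          exact this.continuousAt
        · simp
      · have : Continuous fun p : ℝ × (Fin n → ℝ) => (1 + p.1 • A).adjugate := by fun_prop
        exact this.continuousAt
    exact (h1.mul hpolc.continuousAt).mul h2
  · have hev : ∀ᶠ t in 𝓝 (0:ℝ), (1 + t • A).det ≠ 0 := by
      have : Continuous fun t : ℝ => (1 + t • A).det := by fun_prop
      exact this.continuousAt.eventually_ne (by simp)
    filter_upwards [hev] with t ht z
    have hu : IsUnit (1 + t • A).det := isUnit_iff_ne_zero.mpr ht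
    have hv : IsUnit (1 - t • A).det := by rw [← hdet, det_transpose]; exact hu
    set u := 1 + t • A with hudef
    set v := 1 - t • A with hvdef
    have huv : u * v = v * u := by 
      rw [hudef, hvdef]
      simp only [Matrix.add_mul, Matrix.mul_add, Matrix.sub_mul, Matrix.mul_sub,
        Matrix.smul_mul, Matrix.mul_smul, Matrix.one_mul, Matrix.mul_one]
      module
    have uu : u * u⁻¹ = 1 := mul_nonsing_inv _ hu
    have uu' : u⁻¹ * u = 1 := nonsing_inv_mul _ hu
    have vv : v * v⁻¹ = 1 := mul_nonsing_inv _ hv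
    have vv' : v⁻¹ * v = 1 := nonsing_inv_mul _ hv
    have huT : uᵀ = v := hdet t
    have hvT : vᵀ = u := by rw [← huT, transpose_transpose]
    have hQT : (v⁻¹ * u)ᵀ = v * u⁻¹ := by
      rw [transpose_mul, transpose_nonsing_inv, hvT, huT]
    refine ⟨v⁻¹ * u, ?_, ?_⟩
    · rw [hQT]
      calc v⁻¹ * u * (v * u⁻¹) = v⁻¹ * (u * v) * u⁻¹ := by noncomm_ring
        _ = (v⁻¹ * v) * (u * u⁻¹) := by rw [huv]; noncomm_ring
        _ = 1 := by rw [vv', uu, Matrix.one_mul]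
    · rw [hQT]
      have hdiag : diagonal (l + t • w + (t ^ 2 / 2) • z) = D + t • W + (t^2/2) • diagonal z := by
        rw [hD, hW, ← diagonal_smul, ← diagonal_smul, diagonal_add, diagonal_add]; rfl
      have key : v * (D + t • K) * u + t ^ 2 • pol (t, z)
          = u * (D + t • W + (t^2/2) • diagonal z) * v := by
        have hK2 : t • K = t • (W + (2:ℝ) • (A * D) - (2:ℝ) • (D * A)) := by rw [← hK']
        have e1 : v * (D + t • K) * u = D + t • K + t • (D * A) - t • (A * D) + t^2 • (K * A)
            - t^2 • (A * K) - t^2 • (A * D * A) - t^3 • (A * K * A) := by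
          rw [hudef, hvdef]
          simp only [Matrix.add_mul, Matrix.mul_add, Matrix.sub_mul, Matrix.mul_sub,
            Matrix.smul_mul, Matrix.mul_smul, Matrix.one_mul, Matrix.mul_one, Matrix.mul_assoc]
          module
        rw [e1, hK2, hudef, hvdef, hpol]
        simp only [Matrix.add_mul, Matrix.mul_add, Matrix.sub_mul, Matrix.mul_sub,
            Matrix.smul_mul, Matrix.mul_smul, Matrix.one_mul, Matrix.mul_one, Matrix.mul_assoc]
        module
      rw [hdiag]
      calc _ = (v⁻¹ * v) * (D + t • K) * (u * u⁻¹) + t^2 • (v⁻¹ * pol (t,z) * u⁻¹) := by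
              rw [vv', uu, Matrix.one_mul, Matrix.mul_one]
        _ = v⁻¹ * (v * (D + t • K) * u + t ^ 2 • pol (t, z)) * u⁻¹ := by
              simp only [Matrix.add_mul, Matrix.mul_add, Matrix.smul_mul, Matrix.mul_smul, Matrix.mul_assoc]
        _ = _ := by rw [key]; noncomm_ring

lemma exists_spec {n : ℕ} (A : Matrix (Fin n) (Fin n) ℝ) (hA : Aᵀ = A) :
    ∃ P : Matrix (Fin n) (Fin n) ℝ, P * Pᵀ = 1 ∧ A = P * diagonal (eigval A) * Pᵀ := by
  have h : A.IsHermitian := by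
    rw [Matrix.IsHermitian, Matrix.conjTranspose_eq_transpose_of_trivial, hA]
  set V : Matrix (Fin n) (Fin n) ℝ := h.eigenvectorUnitary.1 with hV
  set s := Tuple.sort (fun j => -h.eigenvalues j) with hs
  have hVs : star V = Vᵀ := by
    rw [Matrix.star_eq_conjTranspose, Matrix.conjTranspose_eq_transpose_of_trivial]
  have hVV : V * Vᵀ = 1 := by
    rw [← hVs]; exact Unitary.mul_star_self_of_mem h.eigenvectorUnitary.2
  have hsp : A = V * diagonal h.eigenvalues * Vᵀ := by
    have := h.spectral_theorem
    rw [Unitary.conjStarAlgAut_apply] at this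
    rw [← hVs]
    exact this
  have he : eigval A = fun i => h.eigenvalues (s i) := by
    rw [eigval, dif_pos h]
  refine ⟨V.submatrix id s, ?_, ?_⟩
  · rw [Matrix.transpose_submatrix, Matrix.submatrix_mul_equiv, hVV]
    simp
  · rw [he]
    have : diagonal (fun i => h.eigenvalues (s i)) = (diagonal h.eigenvalues).submatrix s s := by
      rw [Matrix.submatrix_diagonal_equiv]; rfl
    rw [this, Matrix.transpose_submatrix, Matrix.submatrix_mul_equiv, Matrix.submatrix_mul_equiv,
      ← hsp]
    simp

lemma block_lemma {n : ℕ} (M : Matrix (Fin n) (Fin n) ℝ) (hM : Mᵀ = M) (s : Finset (Fin n)) :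
    ∃ P : Matrix (Fin n) (Fin n) ℝ, (∀ a b, a ∉ s → P a b = 0) ∧
      (∀ b ∈ s, ∀ c ∈ s, (Pᵀ * P) b c = if b = c then 1 else 0) ∧
      (∀ b (hb : b ∈ s), ∀ c ∈ s, (Pᵀ * M * P) b c = if b = c then
        eigval (Matrix.of fun x y : Fin s.card => M (s.orderIsoOfFin rfl x) (s.orderIsoOfFin rfl y))
          ((s.orderIsoOfFin rfl).symm ⟨b, hb⟩) else 0) := by
  classical
  set e := s.orderIsoOfFin rfl with he
  set N : Matrix (Fin s.card) (Fin s.card) ℝ := Matrix.of fun x y => M (e x) (e y) with hN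
  have hNT : Nᵀ = N := by
    ext x y
    exact congrFun (congrFun hM (e x)) (e y)
  obtain ⟨p, hp1, hp2⟩ := exists_spec N hNT
  have hp1' : pᵀ * p = 1 := mul_eq_one_comm.mp hp1
  have hp3 : pᵀ * N * p = diagonal (eigval N) := by
    calc pᵀ * N * p = pᵀ * (p * diagonal (eigval N) * pᵀ) * p := by rw [← hp2]
      _ = (pᵀ * p) * diagonal (eigval N) * (pᵀ * p) := by noncomm_ring
      _ = _ := by rw [hp1', Matrix.one_mul, Matrix.mul_one]
  have hsum : ∀ f : Fin n → ℝ, (∀ a, a ∉ s → f a = 0) → ∑ a, f a = ∑ x, f (e x) := by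
    intro f hf
    rw [← Finset.sum_subset (Finset.subset_univ s) (fun a _ ha => hf a ha), ← Finset.sum_coe_sort]
    exact (Equiv.sum_comp e.toEquiv (fun a : s => f a)).symm
  set P : Matrix (Fin n) (Fin n) ℝ := Matrix.of fun a b =>
    if ha : a ∈ s then (if hb : b ∈ s then p (e.symm ⟨a, ha⟩) (e.symm ⟨b, hb⟩) else 0) else 0 with hP
  have hPe : ∀ x b (hb : b ∈ s), P (e x) b = p x (e.symm ⟨b, hb⟩) := by
    intro x b hb
    simp [hP, hb]
  have hP0 : ∀ a b, a ∉ s → P a b = 0 := by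
    intro a b ha
    simp [hP, ha]
  refine ⟨P, hP0, ?_, ?_⟩
  · intro b hb c hc
    have := congrFun (congrFun hp1' (e.symm ⟨b, hb⟩)) (e.symm ⟨c, hc⟩)
    rw [Matrix.mul_apply, Matrix.one_apply] at this
    rw [Matrix.mul_apply, hsum _ (fun a ha => by simp [hP0 a _ ha])]
    simp only [transpose_apply, hPe _ _ hb, hPe _ _ hc] at this ⊢
    rw [this]
    simp
  · intro b hb c hc
    have := congrFun (congrFun hp3 (e.symm ⟨b, hb⟩)) (e.symm ⟨c, hc⟩)
    rw [Matrix.mul_apply, Matrix.diagonal_apply] at this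
    simp only [Matrix.mul_apply, transpose_apply] at this ⊢
    rw [hsum _ (fun a ha => by simp [hP0 a _ ha])]
    have hs2 : ∀ y, ∑ a, P a b * M a y = ∑ x, P (e x) b * M (e x) y :=
      fun y => hsum _ (fun a ha => by simp [hP0 a _ ha])
    simp_rw [hs2]
    simp only [hPe _ _ hb, hPe _ _ hc]
    simp only [hN, of_apply] at this ⊢
    rw [this]
    simp

lemma exists_basis {n : ℕ} (X U H : Matrix (Fin n) (Fin n) ℝ) (hU : U ∈ eigOrth X) (hH : Hᵀ = H) :
    ∃ V : Matrix (Fin n) (Fin n) ℝ, V * Vᵀ = 1 ∧ X = V * diagonal (eigval X) * Vᵀ ∧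
      ∀ i j, eigval X i = eigval X j →
        (Vᵀ * H * V) i j = if i = j then lambdaDir X U H i else 0 := by
  obtain ⟨hU1, hU2⟩ := hU
  set M := Uᵀ * H * U with hM
  have hMT : Mᵀ = M := by
    rw [hM, transpose_mul, transpose_mul, transpose_transpose, hH, Matrix.mul_assoc]
  choose P hP0 hP1 hP2 using block_lemma M hMT
  have hblk : ∀ b c, eigval X b = eigval X c → blockSet X b = blockSet X c := by
    intro b c h
    simp [blockSet, h]
  have hmem : ∀ b c, eigval X b = eigval X c → b ∈ blockSet X c := by
    intro b c h
    simp [blockSet, h]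
  set V : Matrix (Fin n) (Fin n) ℝ := Matrix.of fun a b => P (blockSet X b) a b with hV
  have hV0 : ∀ a b, eigval X a ≠ eigval X b → V a b = 0 := by
    intro a b h
    exact hP0 _ _ _ (by simp [blockSet, h])
  have hVV : Vᵀ * V = 1 := by
    ext b c
    by_cases h : eigval X b = eigval X c
    · rw [Matrix.one_apply, ← hP1 (blockSet X c) b (hmem b c h) c (hmem c c rfl)]
      simp only [Matrix.mul_apply, transpose_apply, hV, of_apply, hblk b c h]
    · rw [Matrix.one_apply_ne (fun e => h (by rw [e])), Matrix.mul_apply]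
      refine Finset.sum_eq_zero fun a _ => ?_
      rw [transpose_apply]
      by_cases h1 : eigval X a = eigval X b
      · rw [hV0 a c (by rw [h1]; exact h), mul_zero]
      · rw [hV0 a b h1, zero_mul]
  have hVV' : V * Vᵀ = 1 := mul_eq_one_comm.mp hVV
  have hVD : V * diagonal (eigval X) = diagonal (eigval X) * V := by
    ext a b
    rw [Matrix.mul_diagonal, Matrix.diagonal_mul]
    by_cases h1 : eigval X a = eigval X b
    · rw [h1, mul_comm]
    · rw [hV0 a b h1]; simp
  refine ⟨U * V, ?_, ?_, ?_⟩
  · rw [transpose_mul, Matrix.mul_assoc, ← Matrix.mul_assoc V, hVV', Matrix.one_mul, hU1]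
  · calc X = U * diagonal (eigval X) * Uᵀ := hU2
      _ = U * (diagonal (eigval X) * (V * Vᵀ)) * Uᵀ := by rw [hVV', Matrix.mul_one]
      _ = U * ((diagonal (eigval X) * V) * Vᵀ) * Uᵀ := by rw [Matrix.mul_assoc (diagonal _)]
      _ = _ := by rw [← hVD, transpose_mul]; simp only [Matrix.mul_assoc]
  · intro b c h
    have e1 : (U * V)ᵀ * H * (U * V) = Vᵀ * M * V := by
      rw [transpose_mul, hM]; simp only [Matrix.mul_assoc]
    rw [e1]
    have h2 := hP2 (blockSet X b) b (hmem b b rfl) c (hmem c b h.symm)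
    have h3 : (Vᵀ * M * V) b c = ((P (blockSet X b))ᵀ * M * P (blockSet X b)) b c := by
      simp only [Matrix.mul_apply, transpose_apply, hV, of_apply, hblk b c h]
    rw [h3, h2]
    rfl

lemma construct {n : ℕ} (X H : Sym n) (U : Matrix (Fin n) (Fin n) ℝ) (hU : U ∈ eigOrth X.val) :
    ∃ R : ℝ × (Fin n → ℝ) → Sym n, (∀ z, ContinuousAt R (0, z)) ∧
      ∀ᶠ t in 𝓝 (0:ℝ), ∀ z, ∃ Q : Matrix (Fin n) (Fin n) ℝ, Q * Qᵀ = 1 ∧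
        (X + t • H + t ^ 2 • R (t, z)).val =
          Q * diagonal (eigval X.val + t • lambdaDir X.val U H.val + (t ^ 2 / 2) • z) * Qᵀ := by
  have hH : H.valᵀ = H.val := H.2
  have hX : X.valᵀ = X.val := X.2
  obtain ⟨V, hV1, hV2, hV3⟩ := exists_basis X.val U H.val hU hH
  have hV1' := mul_eq_one_comm.mp hV1
  set K := Vᵀ * H.val * V with hK
  have hKT : Kᵀ = K := by
    rw [hK, transpose_mul, transpose_mul, transpose_transpose, hH, Matrix.mul_assoc]
  obtain ⟨R, hRc, hR⟩ := cayley (eigval X.val) (lambdaDir X.val U H.val) K hKT hV3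
  have hHK : V * K * Vᵀ = H.val := by
    calc V * K * Vᵀ = (V * Vᵀ) * H.val * (V * Vᵀ) := by rw [hK]; noncomm_ring
      _ = _ := by rw [hV1, Matrix.one_mul, Matrix.mul_one]
  set S : ℝ × (Fin n → ℝ) → Matrix (Fin n) (Fin n) ℝ := fun p =>
    (1/2 : ℝ) • (V * R p * Vᵀ + (V * R p * Vᵀ)ᵀ) with hS
  have hSs : ∀ p, S p ∈ symSubmodule n := by
    intro p
    change (S p)ᵀ = S p
    rw [hS]
    simp only [transpose_smul, transpose_add, transpose_transpose]
    rw [add_comm]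
  refine ⟨fun p => ⟨S p, hSs p⟩, ?_, ?_⟩
  · intro z
    refine ContinuousAt.codRestrict (f := S) hSs ?_
    have hc : Continuous fun A : Matrix (Fin n) (Fin n) ℝ =>
      (1/2 : ℝ) • (V * A * Vᵀ + (V * A * Vᵀ)ᵀ) := by fun_prop
    exact ContinuousAt.comp (f := R) (g := fun A : Matrix (Fin n) (Fin n) ℝ =>
      (1/2 : ℝ) • (V * A * Vᵀ + (V * A * Vᵀ)ᵀ)) hc.continuousAt (hRc z)
  · filter_upwards [hR] with t ht z
    obtain ⟨Q, hQ1, hQ2⟩ := ht z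
    refine ⟨V * Q, ?_, ?_⟩
    · rw [transpose_mul, Matrix.mul_assoc, ← Matrix.mul_assoc Q, hQ1, Matrix.one_mul, hV1]
    set dd := diagonal (eigval X.val + t • lambdaDir X.val U H.val + (t ^ 2 / 2) • z) with hdd
    have h1 : X.val + t • H.val + t ^ 2 • (V * R (t, z) * Vᵀ) = V * Q * dd * (V * Q)ᵀ := by
      have : V * (Q * dd * Qᵀ) * Vᵀ = V * Q * dd * (V * Q)ᵀ := by
        rw [transpose_mul]; simp only [Matrix.mul_assoc]
      rw [← this, ← hQ2]
      simp only [Matrix.mul_add, Matrix.add_mul, Matrix.mul_smul, Matrix.smul_mul]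
      rw [← hV2, hHK]
    have h2 : X.val + t • H.val + t ^ 2 • (V * R (t, z) * Vᵀ)ᵀ = V * Q * dd * (V * Q)ᵀ := by
      have := congrArg Matrix.transpose h1
      rw [transpose_add, transpose_add, transpose_smul, transpose_smul, hX, hH] at this
      rw [this, hdd]
      simp only [transpose_mul, transpose_transpose, diagonal_transpose, Matrix.mul_assoc]
    have h3 : (X.val + t • H.val + t ^ 2 • S (t, z))
      = (1/2 : ℝ) • (X.val + t • H.val + t ^ 2 • (V * R (t, z) * Vᵀ)) +
        (1/2 : ℝ) • (X.val + t • H.val + t ^ 2 • (V * R (t, z) * Vᵀ)ᵀ) := by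
      rw [hS]; module
    change X.val + t • H.val + t ^ 2 • S (t, z) = _
    rw [h3, h1, h2, ← add_smul]
    norm_num

lemma theta_eig {n : ℕ} (θ : (Fin n → ℝ) → EReal) (hsym : SymmetricFn θ) (A : Sym n)
    (Q : Matrix (Fin n) (Fin n) ℝ) (hQ : Q * Qᵀ = 1) (a : Fin n → ℝ)
    (hA : A.val = Q * diagonal a * Qᵀ) : specFn θ A = θ a := by
  obtain ⟨P, hP1, hP2⟩ := exists_spec A.val A.2
  obtain ⟨σ, hσ⟩ := HW Q P hQ hP1 a (eigval A.val)
  rw [← hP2, ← hA] at hσ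
  have h0 : ∑ i, (a i - eigval A.val (σ i)) ^ 2 ≤ 0 := by simpa using hσ
  have h1 : ∑ i, (a i - eigval A.val (σ i)) ^ 2 = 0 :=
    le_antisymm h0 (Finset.sum_nonneg fun i _ => sq_nonneg _)
  rw [Finset.sum_eq_zero_iff_of_nonneg (fun i _ => sq_nonneg _)] at h1
  have h2 : a = fun i => eigval A.val (σ i) := by
    ext i
    have := h1 i (Finset.mem_univ i)
    exact sub_eq_zero.mp (pow_eq_zero_iff (by norm_num) |>.mp this)
  rw [specFn, h2, hsym]

lemma er1 (c : ℝ) (hc : 0 < c) (v : EReal) (a M : ℝ) :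
    (c : EReal) * (v - (a : EReal)) ≤ (M : EReal) ↔ v ≤ ((a + M / c : ℝ) : EReal) := by
  induction v with
  | bot => simp [EReal.bot_sub, EReal.coe_mul_bot_of_pos hc]
  | top => simp [EReal.top_sub_coe, EReal.coe_mul_top_of_pos hc, -EReal.coe_add]
  | coe x =>
    norm_cast
    rw [← sub_le_iff_le_add', le_div_iff₀ hc, mul_comm]

lemma er1' (c : ℝ) (hc : 0 < c) (v : EReal) (a M : ℝ) :
    (M : EReal) ≤ (c : EReal) * (v - (a : EReal)) ↔ ((a + M / c : ℝ) : EReal) ≤ v := by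
  induction v with
  | bot => simp [EReal.bot_sub, EReal.coe_mul_bot_of_pos hc, -EReal.coe_add]
  | top => simp [EReal.top_sub_coe, EReal.coe_mul_top_of_pos hc]
  | coe x =>
    norm_cast
    rw [← le_sub_iff_add_le', div_le_iff₀ hc, mul_comm]

lemma er2 (c : ℝ) (hc : 0 < c) (v : EReal) (a b M : ℝ) :
    (c : EReal) * (v - (a : EReal) - (b : EReal)) ≤ (M : EReal) ↔
      v ≤ ((a + b + M / c : ℝ) : EReal) := by
  have : v - (a : EReal) - (b : EReal) = v - ((a + b : ℝ) : EReal) := by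
    induction v with
    | bot => simp [EReal.bot_sub]
    | top => simp [EReal.top_sub_coe, -EReal.coe_add]
    | coe x => norm_cast; ring
  rw [this, er1 c hc]

lemma ipM_cont {n : ℕ} : Continuous fun p : Sym n × Sym n => ipM p.1 p.2 := by
  unfold ipM
  exact ((continuous_subtype_val.comp continuous_fst).matrix_mul
    (continuous_subtype_val.comp continuous_snd)).matrix_trace

lemma ipM_tendsto {n : ℕ} {ι : Type*} {l : Filter ι} {f h : ι → Sym n} {A B : Sym n}
    (hf : Tendsto f l (𝓝 A)) (hh : Tendsto h l (𝓝 B)) :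
    Tendsto (fun p => ipM (f p) (h p)) l (𝓝 (ipM A B)) := by
  have hc : Continuous fun M : Sym n => M.val := continuous_subtype_val
  have h1 : Tendsto (fun p => (f p).val) l (𝓝 A.val) := (hc.tendsto A).comp hf
  have h2 : Tendsto (fun p => (h p).val) l (𝓝 B.val) := (hc.tendsto B).comp hh
  have hm : Continuous fun M : Matrix (Fin n) (Fin n) ℝ => M.trace := continuous_id.matrix_trace
  have h3 : Tendsto (fun p => (f p).val * (h p).val) l (𝓝 (A.val * B.val)) := h1.mul h2
  unfold ipM
  exact Tendsto.comp (g := fun M : Matrix (Fin n) (Fin n) ℝ => M.trace) (hm.tendsto _) h3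

lemma ipM_lin {n : ℕ} (Y H R : Sym n) (t : ℝ) : ipM Y (H + t • R) = ipM Y H + t * ipM Y R := by
  simp [ipM, Matrix.mul_add]

lemma ipM_smul {n : ℕ} (Y R : Sym n) (t : ℝ) : ipM Y (t • R) = t * ipM Y R := by
  simp [ipM]

lemma ipM_smul_smul {n : ℕ} (R : Sym n) (t : ℝ) : ipM (t • R) (t • R) = t ^ 2 * ipM R R := by
  simp [ipM]; ring

lemma hadamard {n : ℕ} (θ : (Fin n → ℝ) → EReal) (hsym : SymmetricFn θ) (X H : Sym n)
    (U : Matrix (Fin n) (Fin n) ℝ) (hU : U ∈ eigOrth X.val) :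
    subderiv θ (eigval X.val) (lambdaDir X.val U H.val) ≤ subderiv (specFn θ) X H := by
  obtain ⟨R, hRc, hR⟩ := construct X H U hU
  set w := lambdaDir X.val U H.val with hw
  set F := (nhdsWithin (0 : ℝ) (Set.Ioi 0)) ×ˢ nhds H with hF
  have ht0 : Tendsto (fun p : ℝ × Sym n => p.1) F (𝓝[>] 0) := tendsto_fst
  have ht0' : Tendsto (fun p : ℝ × Sym n => p.1) F (𝓝 0) := ht0.mono_right nhdsWithin_le_nhds
  have hH0 : Tendsto (fun p : ℝ × Sym n => p.2) F (𝓝 H) := tendsto_snd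
  set B : ℝ × Sym n → ℝ := fun p =>
    ∑ i, ∑ j, ((H - p.2 + p.1 • R (p.1, 0)).val i j) ^ 2 with hB
  have hB0 : Tendsto B F (𝓝 0) := by
    have h1 : Tendsto (fun p : ℝ × Sym n => R (p.1, 0)) F (𝓝 (R (0, 0))) :=
      (hRc 0).tendsto.comp (ht0'.prodMk_nhds tendsto_const_nhds)
    have h2 : Tendsto (fun p : ℝ × Sym n => H - p.2 + p.1 • R (p.1, 0)) F (𝓝 (H - H + (0:ℝ) • R (0,0))) :=
      (tendsto_const_nhds.sub hH0).add (ht0'.smul h1)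
    have h3 : Continuous fun A : Sym n => ∑ i, ∑ j, (A.val i j) ^ 2 := by
      refine continuous_finsetSum _ fun i _ => continuous_finsetSum _ fun j _ => ?_
      exact (continuous_subtype_val.matrix_elem i j).pow 2
    have h4 := (h3.tendsto _).comp h2
    have h5 : ∑ i, ∑ j, ((H - H + (0:ℝ) • R (0,0)).val i j) ^ 2 = 0 := by simp
    rw [h5] at h4
    exact h4
  have hev : ∀ᶠ p in F, ∃ w' : Fin n → ℝ, (∑ i, (w' i - w i) ^ 2 ≤ B p) ∧
      specFn θ (X + p.1 • p.2) = θ (eigval X.val + p.1 • w') := by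
    filter_upwards [ht0'.eventually hR, ht0.eventually self_mem_nhdsWithin] with p hp hpos
    have hpos : 0 < p.1 := hpos
    obtain ⟨Q, hQ1, hQ2⟩ := hp 0
    obtain ⟨P, hP1, hP2⟩ := exists_spec (X + p.1 • p.2).val (X + p.1 • p.2).2
    obtain ⟨σ, hσ⟩ := HW Q P hQ1 hP1 _ (eigval (X + p.1 • p.2).val)
    rw [← hQ2, ← hP2] at hσ
    set a := eigval (X + p.1 • p.2).val with ha
    refine ⟨fun i => p.1⁻¹ * (a (σ i) - eigval X.val i), ?_, ?_⟩
    · have e1 : ∑ i, ∑ j, (((X + p.1 • H + p.1 ^ 2 • R (p.1, 0)).val - (X + p.1 • p.2).val) i j) ^ 2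
          = p.1 ^ 2 * B p := by
        rw [hB]
        simp only [Finset.mul_sum]
        refine Finset.sum_congr rfl fun i _ => Finset.sum_congr rfl fun j _ => ?_
        simp only [Submodule.coe_add, Submodule.coe_sub, Submodule.coe_smul, Matrix.sub_apply,
          Matrix.add_apply, Matrix.smul_apply, smul_eq_mul]
        ring
      rw [e1] at hσ
      have e2 : ∑ i, ((eigval X.val + p.1 • w + (p.1 ^ 2 / 2) • (0 : Fin n → ℝ)) i - a (σ i)) ^ 2
          = p.1 ^ 2 * ∑ i, (p.1⁻¹ * (a (σ i) - eigval X.val i) - w i) ^ 2 := by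
        rw [Finset.mul_sum]
        refine Finset.sum_congr rfl fun i _ => ?_
        simp only [Pi.add_apply, Pi.smul_apply, smul_eq_mul, Pi.zero_apply]
        field_simp
        ring
      rw [e2] at hσ
      exact le_of_mul_le_mul_left hσ (by positivity)
    · have : eigval X.val + p.1 • (fun i => p.1⁻¹ * (a (σ i) - eigval X.val i))
          = fun i => a (σ i) := by
        ext i
        simp only [Pi.add_apply, Pi.smul_apply, smul_eq_mul]
        field_simp
        ring
      rw [this, hsym]
      rfl
  obtain ⟨φ, hφ⟩ := hev.choice
  have hφw : Tendsto φ F (𝓝 w) := by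
    rw [tendsto_pi_nhds]
    intro i
    rw [tendsto_iff_norm_sub_tendsto_zero]
    have hs : Tendsto (fun p => Real.sqrt (B p)) F (𝓝 0) := by
      have := hB0.sqrt
      simpa using this
    refine squeeze_zero' (Eventually.of_forall fun p => norm_nonneg _) ?_ hs
    filter_upwards [hφ] with p hp
    rw [Real.norm_eq_abs]
    apply Real.abs_le_sqrt
    refine le_trans ?_ hp.1
    exact Finset.single_le_sum (f := fun i => (φ p i - w i) ^ 2) (fun i _ => sq_nonneg _)
      (Finset.mem_univ i)
  have hmap : Tendsto (fun p : ℝ × Sym n => (p.1, φ p)) F ((𝓝[>] (0:ℝ)) ×ˢ 𝓝 w) :=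
    ht0.prodMk hφw
  unfold subderiv
  refine (liminf_le_liminf_of_le hmap).trans (le_of_eq ?_)
  rw [← Filter.liminf_comp]
  refine Filter.liminf_congr ?_
  filter_upwards [hφ] with p hp
  simp only [Function.comp]
  rw [← hp.2]
  rfl

lemma subderiv_ne_bot {n : ℕ} (θ : (Fin n → ℝ) → EReal) (x w : Fin n → ℝ)
    (h : LocLipAtRelDom ipV θ x) : subderiv θ x w ≠ ⊥ := by
  obtain ⟨⟨hx1, hx2⟩, V, hV, ℓ, hℓ, hL⟩ := h
  set F := (nhdsWithin (0 : ℝ) (Set.Ioi 0)) ×ˢ nhds w with hF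
  have ht0 : Tendsto (fun p : ℝ × (Fin n → ℝ) => p.1) F (𝓝[>] 0) := tendsto_fst
  have ht0' : Tendsto (fun p : ℝ × (Fin n → ℝ) => p.1) F (𝓝 0) := ht0.mono_right nhdsWithin_le_nhds
  have hw0 : Tendsto (fun p : ℝ × (Fin n → ℝ) => p.2) F (𝓝 w) := tendsto_snd
  have hx0 : Tendsto (fun p : ℝ × (Fin n → ℝ) => x + p.1 • p.2) F (𝓝 x) := by
    have := (tendsto_const_nhds (x := x)).add (ht0'.smul hw0)
    simpa using this
  have hn : Tendsto (fun p : ℝ × (Fin n → ℝ) => nrm ipV p.2) F (𝓝 (nrm ipV w)) := by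
    have hc : Continuous fun w : Fin n → ℝ => nrm ipV w := by
      unfold nrm ipV; fun_prop
    exact (hc.tendsto w).comp hw0
  set a := (θ x).toReal with ha
  have hxa : θ x = (a : EReal) := (EReal.coe_toReal hx1 hx2).symm
  have key : (((-(ℓ * (nrm ipV w + 1)) : ℝ)) : EReal) ≤ subderiv θ x w := by
    refine le_liminf_of_le (by isBoundedDefault) ?_
    filter_upwards [ht0.eventually self_mem_nhdsWithin, hx0.eventually hV,
      hn.eventually (gt_mem_nhds (lt_add_one _))] with p hp hpV hpn
    have hp : 0 < p.1 := hp
    rw [hxa, er1' _ (inv_pos.mpr hp)]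
    by_cases ht : θ (x + p.1 • p.2) = ⊤
    · rw [ht]; exact le_top
    · obtain ⟨hb, -, h3⟩ := hL _ hpV x (mem_of_mem_nhds hV) ht hx1
      have hnr : nrm ipV (x + p.1 • p.2 - x) = p.1 * nrm ipV p.2 := by
        rw [add_sub_cancel_left]
        have : ipV (p.1 • p.2) (p.1 • p.2) = p.1 ^ 2 * ipV p.2 p.2 := by
          simp only [ipV, Finset.mul_sum, Pi.smul_apply, smul_eq_mul]
          exact Finset.sum_congr rfl fun i _ => by ring
        rw [nrm, nrm, this, Real.sqrt_mul (sq_nonneg _), Real.sqrt_sq hp.le]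
      rw [hnr] at h3
      rw [← EReal.coe_toReal ht hb, EReal.coe_le_coe_iff, div_inv_eq_mul]
      have h4 := (abs_le.mp h3).1
      have h5 : ℓ * (p.1 * nrm ipV p.2) ≤ ℓ * (p.1 * (nrm ipV w + 1)) := by
        gcongr
      nlinarith
  intro hbot
  rw [hbot, le_bot_iff] at key
  exact EReal.coe_ne_bot _ key

lemma dir_one {n : ℕ} (θ : (Fin n → ℝ) → EReal) (X Y H : Sym n)
    (hg1 : specFn θ X ≠ ⊤) (hg2 : specFn θ X ≠ ⊥) (r ε : ℝ) (hε : 0 < ε)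
    (hpr : ∀ x' : Sym n, nrm ipM (x' - X) ≤ ε →
      specFn θ X + ((ipM Y (x' - X) - r / 2 * ipM (x' - X) (x' - X) : ℝ) : EReal) ≤ specFn θ x') :
    subderiv2 ipM (specFn θ) X Y H ≠ ⊤ → subderiv (specFn θ) X H = ((ipM Y H : ℝ) : EReal) := by
  set g := specFn θ with hg
  set a := (g X).toReal with ha
  have hga : g X = (a : EReal) := (EReal.coe_toReal hg1 hg2).symm
  set F := (nhdsWithin (0 : ℝ) (Set.Ioi 0)) ×ˢ nhds H with hF
  have ht0 : Tendsto (fun p : ℝ × Sym n => p.1) F (𝓝[>] 0) := tendsto_fst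
  have ht0' : Tendsto (fun p : ℝ × Sym n => p.1) F (𝓝 0) := ht0.mono_right nhdsWithin_le_nhds
  have hH0 : Tendsto (fun p : ℝ × Sym n => p.2) F (𝓝 H) := tendsto_snd
  have hpos : ∀ᶠ p in F, 0 < p.1 := ht0.eventually self_mem_nhdsWithin
  have hYH : Tendsto (fun p : ℝ × Sym n => ipM Y p.2) F (𝓝 (ipM Y H)) :=
    ipM_tendsto tendsto_const_nhds hH0
  intro h2
  apply le_antisymm
  · obtain ⟨M, hM, -⟩ := EReal.lt_iff_exists_real_btwn.mp (lt_top_iff_ne_top.mpr h2)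
    have hfr := frequently_lt_of_liminf_lt (by isBoundedDefault) hM
    rw [← EReal.le_of_forall_lt_iff_le]
    intro c hc
    have hc : ipM Y H < c := by exact_mod_cast hc
    refine liminf_le_of_frequently_le' ?_
    have hlim : Tendsto (fun p : ℝ × Sym n => ipM Y p.2 + p.1 * (M / 2)) F
        (𝓝 (ipM Y H + 0 * (M / 2))) := hYH.add (ht0'.mul_const _)
    rw [zero_mul, add_zero] at hlim
    refine (hfr.and_eventually (hpos.and (hlim.eventually (gt_mem_nhds hc)))).mono ?_
    rintro p ⟨h1, hp, h3⟩
    have h1 := h1.le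
    rw [sdq2, hga, er2 _ (by positivity)] at h1
    rw [hga, er1 _ (inv_pos.mpr hp)]
    refine h1.trans ?_
    rw [EReal.coe_le_coe_iff, div_inv_eq_mul]
    have : M / (2 / p.1 ^ 2) = p.1 * (p.1 * (M / 2)) := by field_simp
    rw [this]
    nlinarith
  · have hlim : Tendsto (fun p : ℝ × Sym n => ipM Y p.2 - r / 2 * p.1 * ipM p.2 p.2) F
        (𝓝 (ipM Y H - r / 2 * 0 * ipM H H)) :=
      hYH.sub ((ht0'.const_mul _).mul
        (ipM_tendsto hH0 hH0))
    rw [mul_zero, zero_mul, sub_zero] at hlim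
    have hlim2 := (continuous_coe_real_ereal.tendsto _).comp hlim
    haveI : NeBot F := by rw [hF]; infer_instance
    rw [← hlim2.liminf_eq]
    refine liminf_le_liminf ?_
    have hn : Tendsto (fun p : ℝ × Sym n => nrm ipM (p.1 • p.2)) F (𝓝 (nrm ipM ((0:ℝ) • H))) := by
      have hc : Continuous fun A : Sym n => nrm ipM A := by
        unfold nrm
        exact (ipM_cont.comp (continuous_id.prodMk continuous_id)).sqrt
      exact (hc.tendsto _).comp (ht0'.smul hH0)
    have h0 : nrm ipM ((0:ℝ) • H) = 0 := by simp [nrm, ipM]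
    rw [h0] at hn
    filter_upwards [hpos, hn.eventually (gt_mem_nhds hε)] with p hp hpn
    simp only [Function.comp]
    rw [hga, er1' _ (inv_pos.mpr hp)]
    have := hpr (X + p.1 • p.2) (by rw [add_sub_cancel_left]; exact hpn.le)
    rw [add_sub_cancel_left, hga, ipM_smul, ipM_smul_smul] at this
    refine le_trans (le_of_eq ?_) this
    norm_cast
    rw [div_inv_eq_mul]
    ring

lemma dir_two {n : ℕ} (θ : (Fin n → ℝ) → EReal) (X Y H : Sym n)
    (hg1 : specFn θ X ≠ ⊤) (hg2 : specFn θ X ≠ ⊥)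
    (hsym : SymmetricFn θ) (hLip : LocLipRelDom ipV θ)
    (hparab : ∀ U ∈ eigOrth X.val, ∀ H : Sym n,
      H ∈ tangentCone {A : Sym n | specFn θ A ≠ ⊤} X →
        ParabEpiDiff θ (eigval X.val) (lambdaDir X.val U H.val)) :
    subderiv (specFn θ) X H = ((ipM Y H : ℝ) : EReal) → subderiv2 ipM (specFn θ) X Y H ≠ ⊤ := by
  set g := specFn θ with hg
  set a := (g X).toReal with ha
  have hga : g X = (a : EReal) := (EReal.coe_toReal hg1 hg2).symm
  set F := (nhdsWithin (0 : ℝ) (Set.Ioi 0)) ×ˢ nhds H with hF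
  have ht0 : Tendsto (fun p : ℝ × Sym n => p.1) F (𝓝[>] 0) := tendsto_fst
  have ht0' : Tendsto (fun p : ℝ × Sym n => p.1) F (𝓝 0) := ht0.mono_right nhdsWithin_le_nhds
  have hH0 : Tendsto (fun p : ℝ × Sym n => p.2) F (𝓝 H) := tendsto_snd
  have hpos : ∀ᶠ p in F, 0 < p.1 := ht0.eventually self_mem_nhdsWithin
  have hYH : Tendsto (fun p : ℝ × Sym n => ipM Y p.2) F (𝓝 (ipM Y H)) :=
    ipM_tendsto tendsto_const_nhds hH0
  intro hcrit
  obtain ⟨U, hU1, hU2⟩ := exists_spec X.val X.2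
  have hU : U ∈ eigOrth X.val := ⟨hU1, hU2⟩
  -- tangent direction
  have htan : H ∈ tangentCone {A : Sym n | g A ≠ ⊤} X := by
    have hlt : subderiv g X H < ⊤ := by rw [hcrit]; exact EReal.coe_lt_top _
    have hfr := frequently_lt_of_liminf_lt (by isBoundedDefault) hlt
    have i1 : FirstCountableTopology (Matrix (Fin n) (Fin n) ℝ) :=
      inferInstanceAs (FirstCountableTopology (Fin n → Fin n → ℝ))
    have i2 : FirstCountableTopology (Sym n) := Topology.IsInducing.subtypeVal.firstCountableTopology
    have i3 : F.IsCountablyGenerated := by rw [hF]; infer_instance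
    obtain ⟨ns, hns, hP⟩ := exists_seq_forall_of_frequently (hfr.and_eventually hpos)
    refine ⟨fun k => (ns k).1, fun k => (ns k).2, fun k => (hP k).2, ht0'.comp hns,
      hH0.comp hns, fun k => ?_⟩
    change g (X + (ns k).1 • (ns k).2) ≠ ⊤
    intro htop
    have h1 := (hP k).1
    rw [htop, hga, EReal.top_sub_coe, EReal.coe_mul_top_of_pos (inv_pos.mpr (hP k).2)] at h1
    exact lt_irrefl _ h1
  obtain ⟨⟨z, hz⟩, hseq⟩ := hparab U hU H htan
  have hle := hadamard θ hsym X H U hU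
  obtain ⟨R, hRc, hR⟩ := construct X H U hU
  set w := lambdaDir X.val U H.val with hw
  have hnb : subderiv θ (eigval X.val) w ≠ ⊥ := subderiv_ne_bot θ _ w (hLip _ hg1)
  set d := (subderiv θ (eigval X.val) w).toReal with hd
  have hdle : d ≤ ipM Y H := by
    rw [← hg, hcrit] at hle
    have hnt : subderiv θ (eigval X.val) w ≠ ⊤ := fun h => by
      rw [h, top_le_iff] at hle; exact EReal.coe_ne_top _ hle
    rw [← EReal.coe_toReal hnt hnb] at hle
    exact_mod_cast hle
  have htpos : ∀ k : ℕ, (0:ℝ) < 1 / ((k:ℝ) + 1) := fun k => by positivity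
  have htz : Tendsto (fun k : ℕ => 1 / ((k:ℝ) + 1)) atTop (𝓝 0) :=
    tendsto_one_div_add_atTop_nhds_zero_nat
  obtain ⟨zs, hzs, hq⟩ := hseq (fun k : ℕ => 1 / ((k:ℝ) + 1)) htpos htz z
  set t := fun k : ℕ => 1 / ((k:ℝ) + 1) with ht
  obtain ⟨M, hM, -⟩ := EReal.lt_iff_exists_real_btwn.mp hz
  have hqM := hq.eventually (gt_mem_nhds hM)
  have hRk : Tendsto (fun k => R (t k, zs k)) atTop (𝓝 (R (0, z))) :=
    (hRc z).tendsto.comp (htz.prodMk_nhds hzs)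
  have hYR : Tendsto (fun k => ipM Y (R (t k, zs k))) atTop (𝓝 (ipM Y (R (0, z)))) :=
    ipM_tendsto tendsto_const_nhds hRk
  set b := ipM Y (R (0, z)) - 1 with hb
  have hYb := hYR.eventually (lt_mem_nhds (show b < ipM Y (R (0, z)) by rw [hb]; linarith))
  have hHk : Tendsto (fun k => (t k, H + t k • R (t k, zs k))) atTop F := by
    refine Tendsto.prodMk ?_ ?_
    · exact tendsto_nhdsWithin_iff.mpr ⟨htz, Eventually.of_forall htpos⟩
    · have := (tendsto_const_nhds (x := H)).add (htz.smul hRk)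
      simpa using this
  have hbound : subderiv2 ipM g X Y H ≤ ((M - 2 * b : ℝ) : EReal) := by
    refine liminf_le_of_frequently_le' ?_
    refine hHk.frequently (Eventually.frequently ?_)
    filter_upwards [hqM, hYb, htz.eventually hR] with k h1 h2 h3
    obtain ⟨Q, hQ1, hQ2⟩ := h3 (zs k)
    have htk := htpos k
    change 0 < t k at htk
    have hval : g (X + t k • (H + t k • R (t k, zs k)))
        = θ (eigval X.val + t k • w + (t k ^ 2 / 2) • zs k) := by
      apply theta_eig θ hsym _ Q hQ1
      rw [← hQ2]
      congr 1
      module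
    have h1 := h1.le
    have hga' : θ (eigval X.val) = (a : EReal) := hga
    rw [parabQuot, hga', er2 _ (by positivity), ← hd] at h1
    simp only [sdq2]
    rw [hval, hga, er2 _ (by positivity)]
    refine h1.trans ?_
    rw [EReal.coe_le_coe_iff, ipM_lin]
    have e1 : ∀ m : ℝ, m / (2 / t k ^ 2) = t k ^ 2 * (m / 2) := fun m => by field_simp
    rw [e1, e1]
    have e2 : t k * d ≤ t k * ipM Y H := by gcongr
    have e3 : t k ^ 2 * b ≤ t k ^ 2 * ipM Y (R (t k, zs k)) := by gcongr
    nlinarith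
  intro htop
  rw [htop, top_le_iff] at hbound
  exact EReal.coe_ne_top _ hbound


/-- Proposition 3.7: domain of the second subderivative equals the critical
cone, under parabolic epi-differentiability of `θ`. -/
theorem dom_second_subderiv_eq_critical_cone {n : ℕ} (θ : (Fin n → ℝ) → EReal)
    (X Y : Sym n)
    (hsym : SymmetricFn θ) (hLip : LocLipRelDom ipV θ)
    (hprox : ProxSubgrad ipM (specFn θ) X Y)
    (hparab : ∀ U ∈ eigOrth X.val, ∀ H : Sym n,
      H ∈ tangentCone {A : Sym n | specFn θ A ≠ ⊤} X →
        ParabEpiDiff θ (eigval X.val) (lambdaDir X.val U H.val)) :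
    {H : Sym n | subderiv2 ipM (specFn θ) X Y H ≠ ⊤} =
      criticalCone ipM (specFn θ) X Y := by
  obtain ⟨⟨hg1, hg2⟩, r, hr, ε, hε, hpr⟩ := hprox
  ext H
  exact ⟨dir_one θ X Y H hg1 hg2 r ε hε hpr, dir_two θ X Y H hg1 hg2 hsym hLip hparab⟩

end SpecPaper
end
end
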